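/- Suppose q1 and q2 are continuous real-valued potentials on [0,1] with q1(x) = q2(x) for all x ∈ [1/2,1], a is an admissible boundary pulse, and u1, u2 are classical solutions of the heat problem for q1 and q2 respectively, with the same boundary data a. If the fluxes at the left endpoint agree, i.e. ∂x u1(0,t) = ∂x u2(0,t) for all t > 0, then q1 = q2 on [0,1]. -/

import Mathlib

/-- An admissible boundary pulse: integrable on `(0,∞)`, vanishing beyond some
`T > 0`, and not almost everywhere zero. -/
def IsAdmissiblePulse (a : ℝ → ℝ) : Prop :=
  MeasureTheory.IntegrableOn a (Set.Ioi 0) ∧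
  (∃ T > (0:ℝ), ∀ t > T, a t = 0) ∧
  ¬ (a =ᵐ[MeasureTheory.volume.restrict (Set.Ioi 0)] 0)

/-- `u` (with partial derivatives `ux`, `uxx` in `x` and `ut` in `t`) is a
classical solution of `u_t = u_xx - q(x) u` on `[0,1] × (0,∞)` with zero initial
data, `u(0,t) = 0` and `u(1,t) = a(t)`. -/
def IsHeatSolution (q a : ℝ → ℝ) (u ux uxx ut : ℝ → ℝ → ℝ) : Prop :=
  ContinuousOn (fun p : ℝ × ℝ => u p.1 p.2) (Set.Icc 0 1 ×ˢ Set.Ici 0) ∧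
  (∀ t > (0:ℝ), ∀ x ∈ Set.Icc (0:ℝ) 1, HasDerivAt (fun y => u y t) (ux x t) x) ∧
  (∀ t > (0:ℝ), ∀ x ∈ Set.Icc (0:ℝ) 1, HasDerivAt (fun y => ux y t) (uxx x t) x) ∧
  (∀ t > (0:ℝ), ContinuousOn (fun x => uxx x t) (Set.Icc 0 1)) ∧
  (∀ x ∈ Set.Icc (0:ℝ) 1, ∀ t > (0:ℝ), HasDerivAt (fun s => u x s) (ut x t) t) ∧
  (∀ x ∈ Set.Icc (0:ℝ) 1, ContinuousOn (fun t => ut x t) (Set.Ioi 0)) ∧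
  (∀ x ∈ Set.Ioo (0:ℝ) 1, ∀ t > (0:ℝ), ut x t = uxx x t - q x * u x t) ∧
  (∀ x ∈ Set.Icc (0:ℝ) 1, u x 0 = 0) ∧
  (∀ t > (0:ℝ), u 0 t = 0 ∧ u 1 t = a t)

/-- Exponential growth bound `|u| + |u_x| ≤ C e^{c t}` on `[0,1] × [0,∞)`. -/
def HeatGrowthBound (u ux : ℝ → ℝ → ℝ) (C c : ℝ) : Prop :=
  ∀ x ∈ Set.Icc (0:ℝ) 1, ∀ t ∈ Set.Ici (0:ℝ), |u x t| + |ux x t| ≤ C * Real.exp (c * t)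


open Set Filter Topology MeasureTheory

/-- Picard iterates for the system `y' = z`, `z' = p y` with data `(a,b)` at `x0`. -/
noncomputable def sit {𝕜 : Type} [RCLike 𝕜] (p : ℝ → 𝕜) (x0 : ℝ) (a b : 𝕜) : ℕ → ℝ → 𝕜 × 𝕜
  | 0 => fun _ => (a, b)
  | n + 1 => fun x => (∫ t in x0..x, (sit p x0 a b n t).2, ∫ t in x0..x, p t * (sit p x0 a b n t).1)

noncomputable def solY {𝕜 : Type} [RCLike 𝕜] (p : ℝ → 𝕜) (x0 : ℝ) (a b : 𝕜) (x : ℝ) : 𝕜 :=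
  ∑' n, (sit p x0 a b n x).1

noncomputable def solZ {𝕜 : Type} [RCLike 𝕜] (p : ℝ → 𝕜) (x0 : ℝ) (a b : 𝕜) (x : ℝ) : 𝕜 :=
  ∑' n, (sit p x0 a b n x).2

section picard
variable {𝕜 : Type} [RCLike 𝕜] {p : ℝ → 𝕜} {x0 : ℝ} {a b : 𝕜}

lemma sit_cont (hp : Continuous p) (n : ℕ) : Continuous (sit p x0 a b n) := by
  induction n with
  | zero => exact continuous_const
  | succ n ih =>
    refine Continuous.prodMk ?_ ?_
    · exact intervalIntegral.continuous_primitive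
        (fun _ _ => (continuous_snd.comp ih).intervalIntegrable _ _) _
    · exact intervalIntegral.continuous_primitive
        (fun _ _ => (hp.mul (continuous_fst.comp ih)).intervalIntegrable _ _) _

lemma norm_int_pow_le {f : ℝ → 𝕜} {x0 x C : ℝ} {n : ℕ} 
    (h : ∀ t, ‖f t‖ ≤ C * |t - x0| ^ n) :
    ‖∫ t in x0..x, f t‖ ≤ C * (|x - x0| ^ (n + 1) / (n + 1)) := by
  rw [intervalIntegral.norm_integral_eq_norm_integral_uIoc, ← integral_pow_abs_sub_uIoc,
    ← integral_const_mul]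
  refine norm_integral_le_of_norm_le ?_ (Eventually.of_forall h)
  have : Continuous fun t : ℝ => C * |t - x0| ^ n := by fun_prop
  exact (this.intervalIntegrable x0 x).def'

lemma sit_bound {κ c : ℝ} (_hκ : 0 ≤ κ) (hpb : ∀ x, ‖p x‖ ≤ κ ^ 2)
    (ha : ‖a‖ ≤ c) (hb : ‖b‖ ≤ c * κ) (n : ℕ) : ∀ x,
    ‖(sit p x0 a b n x).1‖ ≤ c * ((κ * |x - x0|) ^ n / n.factorial) ∧
    ‖(sit p x0 a b n x).2‖ ≤ c * κ * ((κ * |x - x0|) ^ n / n.factorial) := by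
  have hc : 0 ≤ c := (norm_nonneg _).trans ha
  induction n with
  | zero => intro x; simpa [sit] using ⟨ha, hb⟩
  | succ n ih =>
    intro x
    have hf : ((n + 1).factorial : ℝ) = (n + 1) * n.factorial := by
      rw [Nat.factorial_succ]; push_cast; ring
    have hf0 : (n.factorial : ℝ) ≠ 0 := by exact_mod_cast n.factorial_ne_zero
    have hn : (n + 1 : ℝ) ≠ 0 := by positivity
    constructor
    · have := norm_int_pow_le (f := fun t => (sit p x0 a b n t).2) (x0 := x0) (x := x)
        (C := c * κ * (κ ^ n / n.factorial)) (n := n) (fun t => by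
          refine ((ih t).2).trans (le_of_eq ?_)
          rw [mul_pow]; ring)
      refine this.trans (le_of_eq ?_)
      rw [hf]; field_simp; ring
    · have := norm_int_pow_le (f := fun t => p t * (sit p x0 a b n t).1) (x0 := x0) (x := x)
        (C := c * κ ^ 2 * (κ ^ n / n.factorial)) (n := n) (fun t => by
          rw [norm_mul]
          refine (mul_le_mul (hpb t) (ih t).1 (norm_nonneg _) (by positivity)).trans (le_of_eq ?_)
          rw [mul_pow]; ring)
      refine this.trans (le_of_eq ?_)
      rw [hf]; field_simp; ring

lemma hasSum_exp' (r : ℝ) : HasSum (fun n : ℕ => r ^ n / n.factorial) (Real.exp r) := by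
  rw [Real.exp_eq_exp_ℝ]
  exact NormedSpace.expSeries_div_hasSum_exp r

lemma sit_summable1 {κ c : ℝ} (hκ : 0 ≤ κ) (hpb : ∀ x, ‖p x‖ ≤ κ ^ 2)
    (ha : ‖a‖ ≤ c) (hb : ‖b‖ ≤ c * κ) (x : ℝ) : Summable fun n => (sit p x0 a b n x).1 :=
  Summable.of_norm_bounded ((hasSum_exp' _).summable.mul_left c)
    (fun n => (sit_bound hκ hpb ha hb n x).1)

lemma sit_summable2 {κ c : ℝ} (hκ : 0 ≤ κ) (hpb : ∀ x, ‖p x‖ ≤ κ ^ 2)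
    (ha : ‖a‖ ≤ c) (hb : ‖b‖ ≤ c * κ) (x : ℝ) : Summable fun n => (sit p x0 a b n x).2 :=
  Summable.of_norm_bounded ((hasSum_exp' _).summable.mul_left (c * κ))
    (fun n => (sit_bound hκ hpb ha hb n x).2)

lemma solY_bound {κ c : ℝ} (hκ : 0 ≤ κ) (hpb : ∀ x, ‖p x‖ ≤ κ ^ 2)
    (ha : ‖a‖ ≤ c) (hb : ‖b‖ ≤ c * κ) (x : ℝ) :
    ‖solY p x0 a b x‖ ≤ c * Real.exp (κ * |x - x0|) :=
  tsum_of_norm_bounded ((hasSum_exp' _).mul_left c) (fun n => (sit_bound hκ hpb ha hb n x).1)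

lemma solZ_bound {κ c : ℝ} (hκ : 0 ≤ κ) (hpb : ∀ x, ‖p x‖ ≤ κ ^ 2)
    (ha : ‖a‖ ≤ c) (hb : ‖b‖ ≤ c * κ) (x : ℝ) :
    ‖solZ p x0 a b x‖ ≤ c * κ * Real.exp (κ * |x - x0|) :=
  tsum_of_norm_bounded ((hasSum_exp' _).mul_left (c * κ))
    (fun n => (sit_bound hκ hpb ha hb n x).2)

lemma exists_kappa {M : ℝ} (hM : ∀ x, ‖p x‖ ≤ M) (a b : 𝕜) : ∃ κ c : ℝ, 1 ≤ κ ∧ 0 ≤ c ∧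
    (∀ x, ‖p x‖ ≤ κ ^ 2) ∧ ‖a‖ ≤ c ∧ ‖b‖ ≤ c * κ := by
  have hM0 : 0 ≤ M := (norm_nonneg _).trans (hM 0)
  refine ⟨M + 1, ‖a‖ + ‖b‖, by linarith, by positivity, fun x => (hM x).trans (by nlinarith),
    by linarith [norm_nonneg b], ?_⟩
  have := norm_nonneg a
  have := norm_nonneg b
  nlinarith [mul_nonneg this hM0, mul_nonneg (norm_nonneg a) hM0]

lemma solY_init : solY p x0 a b x0 = a := by
  unfold solY
  rw [tsum_eq_single 0]
  · rfl
  · rintro (_ | n) h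
    · exact absurd rfl h
    · simp [sit]

lemma solZ_init : solZ p x0 a b x0 = b := by
  unfold solZ
  rw [tsum_eq_single 0]
  · rfl
  · rintro (_ | n) h
    · exact absurd rfl h
    · simp [sit]

lemma sol_pow_mono {κ R x x0 : ℝ} (hκ : 0 ≤ κ) (hx : |x - x0| ≤ R) (n : ℕ) :
    (κ * |x - x0|) ^ n / (n.factorial : ℝ) ≤ (κ * R) ^ n / n.factorial := by
  gcongr

lemma solY_deriv (hp : Continuous p) {M : ℝ} (hM : ∀ x, ‖p x‖ ≤ M) (x : ℝ) :
    HasDerivAt (solY p x0 a b) (solZ p x0 a b x) x := by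
  obtain ⟨κ, c, hκ1, hc, hpb, ha, hb⟩ := exists_kappa hM a b
  have hκ : 0 ≤ κ := by linarith
  set R := |x - x0| + 1
  set g' : ℕ → ℝ → 𝕜 := fun n y => match n with | 0 => 0 | n + 1 => (sit p x0 a b n y).2
  set u : ℕ → ℝ := fun n => match n with | 0 => 0 | n + 1 => c * κ * ((κ * R) ^ n / n.factorial)
  have hu : Summable u := by
    rw [← summable_nat_add_iff 1]
    exact (hasSum_exp' (κ * R)).summable.mul_left _
  have key := hasDerivAt_tsum_of_isPreconnected (𝕜 := ℝ) (t := Metric.ball x0 R) (y₀ := x0)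
    (y := x) (g := fun n y => (sit p x0 a b n y).1) (g' := g') hu Metric.isOpen_ball
    (convex_ball x0 R).isPreconnected ?_ ?_ ?_ (sit_summable1 hκ hpb ha hb x0) ?_
  · have h2 : ∑' n, g' n x = solZ p x0 a b x := by
      rw [Summable.tsum_eq_zero_add]
      · simp [g', solZ]
      · rw [← summable_nat_add_iff 1]
        exact sit_summable2 hκ hpb ha hb x
    rw [h2] at key
    exact key
  · rintro (_ | n) y hy
    · exact hasDerivAt_const _ _
    · exact ((continuous_snd.comp (sit_cont hp n)).integral_hasStrictDerivAt x0 y).hasDerivAt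
  · rintro (_ | n) y hy
    · simp [g', u]
    · refine ((sit_bound hκ hpb ha hb n y).2).trans ?_
      have : |y - x0| ≤ R := by rw [← Real.dist_eq]; exact (Metric.mem_ball.1 hy).le
      exact mul_le_mul_of_nonneg_left (sol_pow_mono hκ this n) (by positivity)
  · exact Metric.mem_ball_self (by positivity)
  · rw [Metric.mem_ball, Real.dist_eq]; simp [R]

lemma solZ_deriv (hp : Continuous p) {M : ℝ} (hM : ∀ x, ‖p x‖ ≤ M) (x : ℝ) :
    HasDerivAt (solZ p x0 a b) (p x * solY p x0 a b x) x := by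
  obtain ⟨κ, c, hκ1, hc, hpb, ha, hb⟩ := exists_kappa hM a b
  have hκ : 0 ≤ κ := by linarith
  set R := |x - x0| + 1
  set g' : ℕ → ℝ → 𝕜 := fun n y => match n with | 0 => 0 | n + 1 => p y * (sit p x0 a b n y).1
  set u : ℕ → ℝ := fun n => match n with | 0 => 0 | n + 1 => κ ^ 2 * (c * ((κ * R) ^ n / n.factorial))
  have hu : Summable u := by
    rw [← summable_nat_add_iff 1]
    exact ((hasSum_exp' (κ * R)).summable.mul_left _).mul_left _
  have key := hasDerivAt_tsum_of_isPreconnected (𝕜 := ℝ) (t := Metric.ball x0 R) (y₀ := x0)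
    (y := x) (g := fun n y => (sit p x0 a b n y).2) (g' := g') hu Metric.isOpen_ball
    (convex_ball x0 R).isPreconnected ?_ ?_ ?_ (sit_summable2 hκ hpb ha hb x0) ?_
  · have h2 : ∑' n, g' n x = p x * solY p x0 a b x := by
      rw [Summable.tsum_eq_zero_add]
      · simp [g', solY, tsum_mul_left]
      · rw [← summable_nat_add_iff 1]
        exact (sit_summable1 hκ hpb ha hb x).mul_left _
    rw [h2] at key
    exact key
  · rintro (_ | n) y hy
    · exact hasDerivAt_const _ _
    · exact ((hp.mul (continuous_fst.comp (sit_cont hp n))).integral_hasStrictDerivAt x0 y).hasDerivAt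
  · rintro (_ | n) y hy
    · simp [g', u]
    · have : |y - x0| ≤ R := by rw [← Real.dist_eq]; exact (Metric.mem_ball.1 hy).le
      simp only [g', u, norm_mul]
      refine mul_le_mul (hpb y) (((sit_bound hκ hpb ha hb n y).1).trans ?_) (norm_nonneg _)
        (by positivity)
      exact mul_le_mul_of_nonneg_left (sol_pow_mono hκ this n) (by positivity)
  · exact Metric.mem_ball_self (by positivity)
  · rw [Metric.mem_ball, Real.dist_eq]; simp [R]

end picard

lemma sit_ofReal (p : ℝ → ℝ) (x0 a b : ℝ) (n : ℕ) : ∀ x,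
    sit (fun t => (p t : ℂ)) x0 (a : ℂ) (b : ℂ) n x =
      (((sit p x0 a b n x).1 : ℂ), ((sit p x0 a b n x).2 : ℂ)) := by
  induction n with
  | zero => intro x; rfl
  | succ n ih =>
    intro x
    simp only [sit, ih]
    rw [← intervalIntegral.integral_ofReal, ← intervalIntegral.integral_ofReal]
    simp

lemma solY_ofReal (p : ℝ → ℝ) (x0 a b x : ℝ) :
    solY (fun t => (p t : ℂ)) x0 (a : ℂ) (b : ℂ) x = ((solY p x0 a b x : ℝ) : ℂ) := by
  simp only [solY, sit_ofReal, Complex.ofReal_tsum]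

lemma solZ_ofReal (p : ℝ → ℝ) (x0 a b x : ℝ) :
    solZ (fun t => (p t : ℂ)) x0 (a : ℂ) (b : ℂ) x = ((solZ p x0 a b x : ℝ) : ℂ) := by
  simp only [solZ, sit_ofReal, Complex.ofReal_tsum]

/-- polynomial dependence on the spectral parameter -/
def PolyDep (f : ℂ → ℝ → ℂ) : Prop :=
  ∃ N : ℕ, ∃ c : ℕ → ℝ → ℂ, (∀ m, Continuous (c m)) ∧
    ∀ s x, f s x = ∑ m ∈ Finset.range N, c m x * s ^ m

lemma PolyDep.const (a : ℂ) : PolyDep (fun _ _ => a) :=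
  ⟨1, fun _ _ => a, fun _ => continuous_const, by simp⟩

lemma PolyDep.integral {f : ℂ → ℝ → ℂ} (hf : PolyDep f) (x0 : ℝ) :
    PolyDep (fun s x => ∫ t in x0..x, f s t) := by
  obtain ⟨N, c, hc, h⟩ := hf
  refine ⟨N, fun m x => ∫ t in x0..x, c m t, fun m =>
    intervalIntegral.continuous_primitive (fun _ _ => (hc m).intervalIntegrable _ _) _, ?_⟩
  intro s x
  simp only [h]
  rw [intervalIntegral.integral_finsetSum]
  · simp
  · intro i _
    exact ((hc i).mul continuous_const).intervalIntegrable _ _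

lemma PolyDep.mul_pot {f : ℂ → ℝ → ℂ} (hf : PolyDep f) {q : ℝ → ℂ} (hq : Continuous q) :
    PolyDep (fun s x => (q x + s) * f s x) := by
  obtain ⟨N, c, hc, h⟩ := hf
  refine ⟨N + 1, fun m x => (if m < N then q x * c m x else 0) +
    (match m with | 0 => 0 | k + 1 => c k x), ?_, ?_⟩
  · rintro (_ | m)
    · by_cases h : 0 < N
      · simp only [h, if_true]; exact (hq.mul (hc 0)).add continuous_const
      · simp only [h, if_false]; exact continuous_const
    · by_cases h : m + 1 < N
      · simp only [h, if_true]; exact (hq.mul (hc _)).add (hc m)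
      · simp only [h, if_false]; exact continuous_const.add (hc m)
  · intro s x
    simp only [add_mul, Finset.sum_add_distrib, h]
    congr 1
    · rw [Finset.sum_range_succ]
      simp only [lt_irrefl, if_false, zero_mul, add_zero, Finset.mul_sum]
      refine Finset.sum_congr rfl fun m hm => ?_
      rw [if_pos (Finset.mem_range.1 hm)]; ring
    · rw [Finset.sum_range_succ']
      simp only [zero_mul, add_zero, Finset.mul_sum]
      refine Finset.sum_congr rfl fun m hm => ?_
      ring

lemma PolyDep.differentiable {f : ℂ → ℝ → ℂ} (hf : PolyDep f) (x : ℝ) :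
    Differentiable ℂ fun s => f s x := by
  obtain ⟨N, c, hc, h⟩ := hf
  simp only [h]
  fun_prop

/-- the coefficient `q + s` -/
noncomputable def pot (q : ℝ → ℝ) (s : ℂ) : ℝ → ℂ := fun t => (q t : ℂ) + s

lemma sit_polyDep {q : ℝ → ℝ} (hq : Continuous q) (x0 : ℝ) (a b : ℂ) (n : ℕ) :
    PolyDep (fun s x => (sit (pot q s) x0 a b n x).1) ∧
    PolyDep (fun s x => (sit (pot q s) x0 a b n x).2) := by
  induction n with
  | zero => exact ⟨PolyDep.const a, PolyDep.const b⟩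
  | succ n ih =>
    exact ⟨ih.2.integral x0, (ih.1.mul_pot (Complex.continuous_ofReal.comp hq)).integral x0⟩

lemma pot_cont {q : ℝ → ℝ} (hq : Continuous q) (s : ℂ) : Continuous (pot q s) :=
  (Complex.continuous_ofReal.comp hq).add continuous_const

lemma pot_bound {q : ℝ → ℝ} {M : ℝ} (hM : ∀ x, |q x| ≤ M) (s : ℂ) (x : ℝ) :
    ‖pot q s x‖ ≤ M + ‖s‖ := by
  refine (norm_add_le _ _).trans ?_
  simpa using hM x

lemma sol_differentiable {q : ℝ → ℝ} (hq : Continuous q) {M : ℝ} (hM : ∀ x, |q x| ≤ M)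
    (x0 : ℝ) (a b : ℂ) (x : ℝ) :
    Differentiable ℂ (fun s => solY (pot q s) x0 a b x) ∧
    Differentiable ℂ (fun s => solZ (pot q s) x0 a b x) := by
  have hM0 : 0 ≤ M := (abs_nonneg _).trans (hM 0)
  have main : ∀ s0 : ℂ, DifferentiableAt ℂ (fun s => solY (pot q s) x0 a b x) s0 ∧
      DifferentiableAt ℂ (fun s => solZ (pot q s) x0 a b x) s0 := by
    intro s0
    set κ := M + ‖s0‖ + 2
    have hκ : 0 ≤ κ := by positivity
    set c := ‖a‖ + ‖b‖
    have hpb : ∀ s ∈ Metric.ball s0 1, ∀ x, ‖pot q s x‖ ≤ κ ^ 2 := by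
      intro s hs x
      refine (pot_bound hM s x).trans ?_
      have : ‖s‖ ≤ ‖s0‖ + 1 := by
        have h1 : ‖s - s0‖ < 1 := by simpa [dist_eq_norm] using hs
        have h2 : ‖s‖ ≤ ‖s - s0‖ + ‖s0‖ := by simpa using norm_add_le (s - s0) s0
        linarith
      have h3 : 0 ≤ M + ‖s0‖ := by positivity
      simp only [κ]
      nlinarith
    have ha : ‖a‖ ≤ c := by simp [c]
    have hb : ‖b‖ ≤ c * κ := by
      have : 1 ≤ κ := by simp only [κ]; linarith [norm_nonneg s0]
      have h1 : ‖b‖ ≤ c := by simp [c]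
      have h2 : 0 ≤ c := by positivity
      nlinarith
    have hmem : Metric.ball s0 1 ∈ 𝓝 s0 := Metric.ball_mem_nhds _ one_pos
    constructor
    · refine (Complex.differentiableOn_tsum_of_summable_norm
        (((hasSum_exp' (κ * |x - x0|)).summable.mul_left c)) (fun n => ?_) Metric.isOpen_ball
        (fun n s hs => (sit_bound hκ (hpb s hs) ha hb n x).1)).differentiableAt hmem
      exact ((sit_polyDep hq x0 a b n).1.differentiable x).differentiableOn
    · refine (Complex.differentiableOn_tsum_of_summable_norm
        (((hasSum_exp' (κ * |x - x0|)).summable.mul_left (c * κ))) (fun n => ?_) Metric.isOpen_ball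
        (fun n s hs => (sit_bound hκ (hpb s hs) ha hb n x).2)).differentiableAt hmem
      exact ((sit_polyDep hq x0 a b n).2.differentiable x).differentiableOn
  exact ⟨fun s => (main s).1, fun s => (main s).2⟩

lemma pot_ofReal (q : ℝ → ℝ) (s : ℝ) : pot q (s : ℂ) = fun t => ((q t + s : ℝ) : ℂ) := by
  funext t; simp [pot]

lemma energy_bound {E E' : ℝ → ℝ} {M : ℝ} (hE : ∀ x, HasDerivAt E (E' x) x)
    (hb : ∀ x, |E' x| ≤ M * E x) (x0 x : ℝ) : E x ≤ E x0 * Real.exp (M * |x - x0|) := by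
  rcases le_total x0 x with h | h
  · have hd : ∀ y, HasDerivAt (fun y => E y * Real.exp (-(M * y)))
        (E' y * Real.exp (-(M * y)) + E y * (Real.exp (-(M * y)) * (-(M * 1)))) y := fun y =>
      (hE y).mul (((hasDerivAt_id y).const_mul M).neg.exp)
    have : Antitone (fun y => E y * Real.exp (-(M * y))) := by
      refine antitone_of_deriv_nonpos (fun y => (hd y).differentiableAt) fun y => ?_
      rw [(hd y).deriv]
      have := (abs_le.1 (hb y)).2
      have he := Real.exp_pos (-(M * y))
      nlinarith
    have h1 := this h
    simp only at h1
    rw [abs_of_nonneg (by linarith)]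
    have h2 := mul_le_mul_of_nonneg_right h1 (Real.exp_pos (M * x)).le
    rw [mul_assoc, mul_assoc, ← Real.exp_add, ← Real.exp_add] at h2
    simp only [neg_add_cancel, Real.exp_zero, mul_one] at h2
    rw [show M * (x - x0) = -(M * x0) + M * x by ring]
    exact h2
  · have hd : ∀ y, HasDerivAt (fun y => E y * Real.exp (M * y))
        (E' y * Real.exp (M * y) + E y * (Real.exp (M * y) * (M * 1))) y := fun y =>
      (hE y).mul (((hasDerivAt_id y).const_mul M).exp)
    have : Monotone (fun y => E y * Real.exp (M * y)) := by
      refine monotone_of_deriv_nonneg (fun y => (hd y).differentiableAt) fun y => ?_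
      rw [(hd y).deriv]
      have := (abs_le.1 (hb y)).1
      have he := Real.exp_pos (M * y)
      nlinarith
    have h1 := this h
    simp only at h1
    rw [abs_of_nonpos (by linarith)]
    have h2 := mul_le_mul_of_nonneg_right h1 (Real.exp_pos (-(M * x))).le
    rw [mul_assoc, mul_assoc, ← Real.exp_add, ← Real.exp_add] at h2
    simp only [add_neg_cancel, Real.exp_zero, mul_one] at h2
    rw [show M * -(x - x0) = M * x0 + -(M * x) by ring]
    exact h2

section bounds
variable {q : ℝ → ℝ} {M : ℝ}

lemma real_bound (hM : ∀ x, |q x| ≤ M) (s x : ℝ) : ‖q x + s‖ ≤ M + |s| :=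
  (abs_add_le _ _).trans (by simpa using hM x)

lemma neg_energy (hq : Continuous q) (hM : ∀ x, |q x| ≤ M) {k : ℝ} (hk : 1 ≤ k) (x0 a b x : ℝ) :
    solZ (fun t => q t + -k ^ 2) x0 a b x ^ 2 + k ^ 2 * solY (fun t => q t + -k ^ 2) x0 a b x ^ 2
      ≤ (b ^ 2 + k ^ 2 * a ^ 2) * Real.exp (M * |x - x0|) := by
  set p : ℝ → ℝ := fun t => q t + -k ^ 2
  have hp : Continuous p := hq.add continuous_const
  have hpM : ∀ x, ‖p x‖ ≤ M + |-k ^ 2| := fun x => real_bound hM _ x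
  have hY := fun x => solY_deriv (x0 := x0) (a := a) (b := b) hp hpM x
  have hZ := fun x => solZ_deriv (x0 := x0) (a := a) (b := b) hp hpM x
  have hE := energy_bound (M := M)
    (fun x => ((hZ x).pow 2).add (((hY x).pow 2).const_mul (k ^ 2))) (fun y => ?_) x0 x
  · simp only [Pi.add_apply, Pi.pow_apply, solY_init, solZ_init] at hE
    exact hE
  · simp only [Pi.add_apply, Pi.pow_apply]
    set Y := solY p x0 a b y
    set Z := solZ p x0 a b y
    have h1 : (((2 : ℕ) : ℝ) * Z ^ (2 - 1) * (p y * Y) + k ^ 2 * (((2 : ℕ) : ℝ) * Y ^ (2 - 1) * Z))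
        = q y * (2 * (Y * Z)) := by
      simp only [p]; push_cast; ring
    rw [h1, abs_mul]
    have hM0 : 0 ≤ M := (abs_nonneg _).trans (hM 0)
    have h2 : |2 * (Y * Z)| ≤ Z ^ 2 + k ^ 2 * Y ^ 2 := by
      have : Y ^ 2 ≤ k ^ 2 * Y ^ 2 := by nlinarith [mul_nonneg (sq_nonneg Y) (show (0:ℝ) ≤ k ^ 2 - 1 by nlinarith)]
      rw [abs_le]; constructor <;> nlinarith [sq_nonneg (Y + Z), sq_nonneg (Y - Z)]
    exact mul_le_mul (hM y) h2 (abs_nonneg _) hM0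

lemma exp_sq_aux {M X : ℝ} (hM0 : 0 ≤ M) (h : X ^ 2 ≤ 4 * Real.exp M) :
    |X| ≤ 2 * Real.exp M := by
  have h1 : 1 ≤ Real.exp M := Real.one_le_exp hM0
  refine abs_le_of_sq_le_sq (by nlinarith) (by positivity)

lemma negY (hq : Continuous q) (hM : ∀ x, |q x| ≤ M) {k : ℝ} (hk : 1 ≤ k) (x0 a b x : ℝ)
    (ha : |a| ≤ 1) (hb : |b| ≤ 1) (hx : |x - x0| ≤ 1) :
    ‖solY (pot q (-(k : ℂ) ^ 2)) x0 (a : ℂ) (b : ℂ) x‖ ≤ 2 * Real.exp M := by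
  have hM0 : 0 ≤ M := (abs_nonneg _).trans (hM 0)
  have : (-(k : ℂ) ^ 2) = ((-k ^ 2 : ℝ) : ℂ) := by push_cast; ring
  rw [this, pot_ofReal, solY_ofReal, Complex.norm_real]
  refine exp_sq_aux hM0 ?_
  have h := neg_energy hq hM hk x0 a b x
  have h1 : Real.exp (M * |x - x0|) ≤ Real.exp M := Real.exp_le_exp.2 (by nlinarith)
  have ha2 : a ^ 2 ≤ 1 := by rw [← sq_abs]; nlinarith [abs_nonneg a]
  have hb2 : b ^ 2 ≤ 1 := by rw [← sq_abs]; nlinarith [abs_nonneg b]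
  have h2 : (b ^ 2 + k ^ 2 * a ^ 2) * Real.exp (M * |x - x0|) ≤ (2 * k ^ 2) * Real.exp M := by
    refine mul_le_mul ?_ h1 (Real.exp_pos _).le (by positivity)
    nlinarith
  have h3 : k ^ 2 * solY (fun t => q t + -k ^ 2) x0 a b x ^ 2 ≤ k ^ 2 * (2 * Real.exp M) := by
    nlinarith [sq_nonneg (solZ (fun t => q t + -k ^ 2) x0 a b x)]
  have h4 := le_of_mul_le_mul_left h3 (by positivity)
  nlinarith [Real.exp_pos M]

lemma negZ (hq : Continuous q) (hM : ∀ x, |q x| ≤ M) {k : ℝ} (hk : 1 ≤ k) (x0 x : ℝ)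
    (hx : |x - x0| ≤ 1) :
    ‖solZ (pot q (-(k : ℂ) ^ 2)) x0 0 1 x‖ ≤ 2 * Real.exp M := by
  have hM0 : 0 ≤ M := (abs_nonneg _).trans (hM 0)
  have : (-(k : ℂ) ^ 2) = ((-k ^ 2 : ℝ) : ℂ) := by push_cast; ring
  have h01 := solZ_ofReal (fun t => q t + -k ^ 2) x0 0 1 x
  simp only [Complex.ofReal_zero, Complex.ofReal_one] at h01
  rw [this, pot_ofReal, h01, Complex.norm_real]
  refine exp_sq_aux hM0 ?_
  have h := neg_energy hq hM hk x0 0 1 x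
  have h1 : Real.exp (M * |x - x0|) ≤ Real.exp M := Real.exp_le_exp.2 (by nlinarith)
  have := Real.exp_pos M
  nlinarith [mul_nonneg (sq_nonneg k) (sq_nonneg (solY (fun t => q t + -k ^ 2) x0 0 1 x))]

lemma sit_nonneg {p : ℝ → ℝ} (hp : ∀ x, 0 ≤ p x) (n : ℕ) : ∀ x, 0 ≤ x →
    0 ≤ (sit p 0 0 1 n x).1 ∧ 0 ≤ (sit p 0 0 1 n x).2 := by
  induction n with
  | zero => intro x _; simp [sit]
  | succ n ih =>
    intro x hx
    exact ⟨intervalIntegral.integral_nonneg hx fun t ht => (ih t ht.1).2,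
      intervalIntegral.integral_nonneg hx fun t ht => mul_nonneg (hp t) (ih t ht.1).1⟩

lemma pos_lower {p : ℝ → ℝ} (hp : Continuous p) {N : ℝ} (hN : ∀ x, ‖p x‖ ≤ N) {k : ℝ}
    (hk : 0 < k) (hpk : ∀ x, k ^ 2 ≤ p x) {x : ℝ} (hx : 0 ≤ x) :
    Real.exp (k * x) - Real.exp (-(k * x)) ≤ 2 * k * solY p 0 0 1 x := by
  have hY := fun x => solY_deriv (x0 := 0) (a := (0:ℝ)) (b := 1) hp hN x
  have hZ := fun x => solZ_deriv (x0 := 0) (a := (0:ℝ)) (b := 1) hp hN x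
  have hY0 : ∀ x, 0 ≤ x → 0 ≤ solY p 0 0 1 x := fun x hx =>
    tsum_nonneg fun n => (sit_nonneg (fun x => (sq_nonneg k).trans (hpk x)) n x hx).1
  have he : ∀ y, HasDerivAt (fun y => Real.exp (k * y)) (Real.exp (k * y) * (k * 1)) y :=
    fun y => ((hasDerivAt_id y).const_mul k).exp
  have he' : ∀ y, HasDerivAt (fun y => Real.exp (-(k * y))) (Real.exp (-(k * y)) * (-(k * 1))) y :=
    fun y => ((hasDerivAt_id y).const_mul k).neg.exp
  have hd1 := fun y => (he y).mul ((hZ y).sub ((hY y).const_mul k))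
  have m1 : MonotoneOn ((fun y => Real.exp (k * y)) * (solZ p 0 0 1 - fun y => k * solY p 0 0 1 y)) (Ici 0) := by
    refine monotoneOn_of_deriv_nonneg (convex_Ici 0)
      (fun y _ => (hd1 y).continuousAt.continuousWithinAt)
      (fun y _ => (hd1 y).differentiableAt.differentiableWithinAt) fun y hy => ?_
    rw [(hd1 y).deriv]
    have hy0 : 0 ≤ y := interior_subset hy
    have h1 := hY0 y hy0
    have h2 := hpk y
    have h3 := Real.exp_pos (k * y)
    simp only [Pi.sub_apply]
    have : Real.exp (k * y) * (k * 1) * (solZ p 0 0 1 y - k * solY p 0 0 1 y) +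
      Real.exp (k * y) * (p y * solY p 0 0 1 y - k * solZ p 0 0 1 y) =
      Real.exp (k * y) * ((p y - k ^ 2) * solY p 0 0 1 y) := by ring
    rw [this]
    exact mul_nonneg h3.le (mul_nonneg (by linarith) h1)
  have v1 : ∀ y, 0 ≤ y → 1 ≤ Real.exp (k * y) * (solZ p 0 0 1 y - k * solY p 0 0 1 y) := by
    intro y hy
    have := m1 (mem_Ici.2 le_rfl) (mem_Ici.2 hy) hy
    simpa [solY_init, solZ_init] using this
  have hd2 := fun y => ((he' y).mul (hY y)).add (((he' y).pow 2).const_mul (1 / (2 * k)))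
  have m2 : MonotoneOn ((fun y => Real.exp (-(k * y))) * solY p 0 0 1 + fun y => (1 / (2 * k)) *
      ((fun y => Real.exp (-(k * y))) ^ 2) y) (Ici 0) := by
    refine monotoneOn_of_deriv_nonneg (convex_Ici 0)
      (fun y _ => (hd2 y).continuousAt.continuousWithinAt)
      (fun y _ => (hd2 y).differentiableAt.differentiableWithinAt) fun y hy => ?_
    rw [(hd2 y).deriv]
    have hy0 : 0 ≤ y := interior_subset hy
    have h1 := v1 y hy0
    have h3 := Real.exp_pos (-(k * y))
    have h4 : Real.exp (-(k * y)) * Real.exp (k * y) = 1 := by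
      rw [← Real.exp_add]; simp
    set e := Real.exp (-(k * y))
    have h5 : e ≤ solZ p 0 0 1 y - k * solY p 0 0 1 y := by
      have := mul_le_mul_of_nonneg_left h1 h3.le
      rw [← mul_assoc, h4] at this; linarith
    have : e * (-(k * 1)) * solY p 0 0 1 y + e * solZ p 0 0 1 y +
      1 / (2 * k) * (((2 : ℕ) : ℝ) * e ^ (2 - 1) * (e * (-(k * 1)))) =
      e * (solZ p 0 0 1 y - k * solY p 0 0 1 y - e) := by
      push_cast; field_simp; ring
    rw [this]
    exact mul_nonneg h3.le (by linarith)
  have h := m2 (mem_Ici.2 le_rfl) (mem_Ici.2 hx) hx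
  simp only [Pi.add_apply, Pi.mul_apply, Pi.pow_apply, solY_init, mul_zero, neg_zero, Real.exp_zero,
    one_pow, mul_one, zero_add] at h
  have h4 : Real.exp (-(k * x)) * Real.exp (k * x) = 1 := by
      rw [← Real.exp_add]; simp
  have h3 := Real.exp_pos (-(k * x))
  have h6 := Real.exp_pos (k * x)
  set e := Real.exp (-(k * x))
  set f := Real.exp (k * x)
  have h7 : f ≤ 2 * k * (e * f) * solY p 0 0 1 x + e * (e * f) := by
    have := mul_le_mul_of_nonneg_left h (mul_nonneg (mul_pos two_pos hk).le h6.le)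
    have e1 : 2 * k * f * (1 / (2 * k)) = f := by field_simp
    have e2 : 2 * k * f * (e * solY p 0 0 1 x + 1 / (2 * k) * e ^ 2) =
      2 * k * (e * f) * solY p 0 0 1 x + e * (e * f) := by field_simp
    rw [e1, e2] at this; exact this
  rw [h4] at h7; linarith

lemma posLower (hq : Continuous q) (hM : ∀ x, |q x| ≤ M) {k : ℝ} (hk : M + 2 ≤ k) {x : ℝ}
    (hx : 1 / 2 ≤ x) (hx1 : x ≤ 1) :
    Real.exp (k * x) ≤ 12 * k * ‖solY (pot q ((k : ℂ) ^ 2)) 0 0 1 x‖ := by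
  have hM0 : 0 ≤ M := (abs_nonneg _).trans (hM 0)
  have : ((k : ℂ) ^ 2) = ((k ^ 2 : ℝ) : ℂ) := by push_cast; ring
  have h01 := solY_ofReal (fun t => q t + k ^ 2) 0 0 1 x
  simp only [Complex.ofReal_zero, Complex.ofReal_one] at h01
  rw [this, pot_ofReal, h01, Complex.norm_real]
  have h := pos_lower (p := fun t => q t + k ^ 2) (hq.add continuous_const)
    (fun x => real_bound hM _ x) (k := k - 1) (by linarith)
    (fun x => by nlinarith [(abs_le.1 (hM x)).1]) (x := x) (by linarith)
  set S := solY (fun t => q t + k ^ 2) 0 0 1 x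
  set y := (k - 1) * x
  have hy : 1 / 2 ≤ y := by simp only [y]; nlinarith
  have h1 : Real.exp (-y) ≤ Real.exp y / 2 := by
    have : Real.exp y = Real.exp (-y) * Real.exp (2 * y) := by rw [← Real.exp_add]; ring_nf
    have h2 : 2 * y + 1 ≤ Real.exp (2 * y) := Real.add_one_le_exp _
    nlinarith [Real.exp_pos (-y)]
  have h2 : Real.exp (k * x) = Real.exp y * Real.exp x := by
    rw [← Real.exp_add]; congr 1; simp only [y]; ring
  have h3 : Real.exp x ≤ 3 := (Real.exp_le_exp.2 hx1).trans (Real.exp_one_lt_d9.le.trans (by norm_num))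
  have h4 : Real.exp y ≤ 4 * (k - 1) * S := by linarith
  have h5 : 0 < S := by
    by_contra hS
    have := Real.exp_pos y
    nlinarith [mul_nonneg (show (0:ℝ) ≤ k - 1 by linarith) (neg_nonneg.2 (not_lt.1 hS))]
  rw [h2, Real.norm_eq_abs, abs_of_pos h5]
  calc Real.exp y * Real.exp x ≤ (4 * (k - 1) * S) * 3 :=
        mul_le_mul h4 h3 (Real.exp_pos _).le (by nlinarith)
    _ ≤ 12 * k * S := by nlinarith

lemma posUpper (hM : ∀ x, |q x| ≤ M) {k : ℝ} (hk : M + 2 ≤ k) {x x0 : ℝ}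
    (hx : |x - x0| ≤ 1) :
    ‖solY (pot q ((k : ℂ) ^ 2)) x0 0 1 x‖ ≤ 3 / k * Real.exp (k * |x - x0|) := by
  have hM0 : 0 ≤ M := (abs_nonneg _).trans (hM 0)
  have hk0 : 0 < k := by linarith
  have h := solY_bound (p := pot q ((k : ℂ) ^ 2)) (x0 := x0) (a := 0) (b := 1) (κ := k + 1)
    (c := 1 / (k + 1)) (by linarith) (fun x => (pot_bound hM _ x).trans (by
      rw [norm_pow, Complex.norm_real, Real.norm_eq_abs, sq_abs]; nlinarith)) (by simp; positivity)
    (by simp; field_simp; rfl) x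
  refine h.trans ?_
  have h2 : Real.exp ((k + 1) * |x - x0|) = Real.exp (k * |x - x0|) * Real.exp |x - x0| := by
    rw [← Real.exp_add]; ring_nf
  have h3 : Real.exp |x - x0| ≤ 3 :=
    (Real.exp_le_exp.2 hx).trans (Real.exp_one_lt_d9.le.trans (by norm_num))
  have h4 : 1 / (k + 1) ≤ 1 / k := one_div_le_one_div_of_le hk0 (by linarith)
  rw [h2]
  have h5 := Real.exp_pos (k * |x - x0|)
  calc 1 / (k + 1) * (Real.exp (k * |x - x0|) * Real.exp |x - x0|)
      ≤ 1 / k * (Real.exp (k * |x - x0|) * 3) := by gcongr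
    _ = _ := by ring

lemma growth (hM : ∀ x, |q x| ≤ M) {a b : ℂ} (ha : ‖a‖ ≤ 1) (hb : ‖b‖ ≤ 1) {x x0 : ℝ}
    (hx : |x - x0| ≤ 1) (w : ℂ) :
    ‖solY (pot q (w ^ 2)) x0 a b x‖ ≤ Real.exp (2 * (M + 1)) * Real.exp (2 * ‖w‖) ∧
    ‖solZ (pot q (w ^ 2)) x0 a b x‖ ≤ Real.exp (2 * (M + 1)) * Real.exp (2 * ‖w‖) := by
  have hM0 : 0 ≤ M := (abs_nonneg _).trans (hM 0)
  set κ := ‖w‖ + M + 1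
  have hκ1 : 1 ≤ κ := by simp only [κ]; linarith [norm_nonneg w]
  have hpb : ∀ x, ‖pot q (w ^ 2) x‖ ≤ κ ^ 2 := fun x => (pot_bound hM _ x).trans (by
    rw [norm_pow]; simp only [κ]; nlinarith [norm_nonneg w, mul_nonneg hM0 (norm_nonneg w)])
  have e1 : Real.exp (κ * |x - x0|) ≤ Real.exp κ := Real.exp_le_exp.2 (by nlinarith)
  have e2 : Real.exp (2 * (M + 1)) * Real.exp (2 * ‖w‖) = Real.exp κ * Real.exp κ := by
    rw [← Real.exp_add, ← Real.exp_add]; congr 1; simp only [κ]; ring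
  have e3 : κ ≤ Real.exp κ := by linarith [Real.add_one_le_exp κ]
  have e4 : 0 < Real.exp κ := Real.exp_pos _
  have hb' : ‖b‖ ≤ 1 * κ := by linarith
  rw [e2]
  refine ⟨(solY_bound (by linarith) hpb ha hb' x).trans ?_,
    (solZ_bound (by linarith) hpb ha hb' x).trans ?_⟩
  · rw [one_mul]; nlinarith
  · rw [one_mul]; exact mul_le_mul e3 e1 (Real.exp_pos _).le e4.le

end bounds

lemma PL_zero {f : ℂ → ℂ} (hf : Differentiable ℂ f) {B B' C : ℝ}
    (hg : ∀ w : ℂ, ‖f (w ^ 2)‖ ≤ B * Real.exp (B' * ‖w‖))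
    (hneg : ∀ k : ℝ, 1 ≤ k → ‖f (-(k : ℂ) ^ 2)‖ ≤ C)
    (hpos : Tendsto (fun k : ℝ => f ((k : ℂ) ^ 2)) atTop (𝓝 0)) : ∀ s, f s = 0 := by
  have hB : 0 ≤ B := by simpa using (norm_nonneg _).trans (hg 0)
  set C' := max C (B * Real.exp |B'|)
  have hd : Differentiable ℂ fun w : ℂ => f (w ^ 2) := hf.comp (differentiable_id.pow 2)
  have key : ∀ w : ℂ, 0 ≤ w.re → ‖f (w ^ 2)‖ ≤ C' := by
    intro w hw
    refine PhragmenLindelof.right_half_plane_of_tendsto_zero_on_real (f := fun w : ℂ => f (w ^ 2))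
      hd.diffContOnCl ⟨1, by norm_num, B', ?_⟩ hpos ?_ hw
    · refine Asymptotics.IsBigO.of_bound B (Eventually.of_forall fun z => ?_)
      rw [Real.norm_eq_abs, abs_of_pos (Real.exp_pos _), Real.rpow_one]
      exact hg z
    · intro x
      have hx2 : ((x : ℂ) * Complex.I) ^ 2 = -((|x| : ℝ) : ℂ) ^ 2 := by
        rw [mul_pow, Complex.I_sq, ← Complex.ofReal_pow, ← Complex.ofReal_pow, sq_abs]; ring
      rcases le_total 1 |x| with h | h
      · simp only [hx2]
        exact (hneg _ h).trans (le_max_left _ _)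
      · refine (hg _).trans (le_trans ?_ (le_max_right _ _))
        gcongr
        rw [norm_mul, Complex.norm_I, mul_one, Complex.norm_real, Real.norm_eq_abs]
        calc B' * |x| ≤ |B'| * |x| := by gcongr; exact le_abs_self _
          _ ≤ |B'| * 1 := by gcongr
          _ = |B'| := mul_one _
  have bdd : ∀ s, ‖f s‖ ≤ C' := by
    intro s
    obtain ⟨w, hw⟩ := IsAlgClosed.exists_pow_nat_eq s (n := 2) (by norm_num)
    rcases le_total 0 w.re with h | h
    · rw [← hw]; exact key w h
    · have := key (-w) (by simpa using h)
      rw [← hw]; simpa using this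
  have hconst := hf.apply_eq_apply_of_bounded
    (isBounded_iff_forall_norm_le.2 ⟨C', by rintro _ ⟨s, rfl⟩; exact bdd s⟩)
  intro s
  have : Tendsto (fun k : ℝ => f ((k : ℂ) ^ 2)) atTop (𝓝 (f s)) := by
    simp_rw [fun k : ℝ => hconst ((k : ℂ) ^ 2) s]; exact tendsto_const_nhds
  exact tendsto_nhds_unique this hpos

lemma wronskian_bound {p1 p2 y z θ η : ℝ → ℂ} {α β K : ℝ} (hαβ : α ≤ β)
    (hy : ∀ x ∈ Icc α β, HasDerivAt y (z x) x) (hz : ∀ x ∈ Icc α β, HasDerivAt z (p1 x * y x) x)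
    (hθ : ∀ x ∈ Icc α β, HasDerivAt θ (η x) x) (hη : ∀ x ∈ Icc α β, HasDerivAt η (p2 x * θ x) x)
    (hK : ∀ x ∈ Icc α β, ‖(p1 x - p2 x) * (y x * θ x)‖ ≤ K) :
    ‖(z β * θ β - y β * η β) - (z α * θ α - y α * η α)‖ ≤ K * (β - α) := by
  have := (convex_Icc α β).norm_image_sub_le_of_norm_hasDerivWithin_le (𝕜 := ℝ)
    (f := z * θ - y * η) (f' := fun x => (p1 x - p2 x) * (y x * θ x)) (C := K) (x := α) (y := β)
    (fun x hx => by
      have := ((hz x hx).mul (hθ x hx)).sub ((hy x hx).mul (hη x hx))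
      refine (this.congr_deriv ?_).hasDerivWithinAt
      ring) hK (left_mem_Icc.2 hαβ) (right_mem_Icc.2 hαβ)
  rwa [Real.norm_eq_abs, abs_of_nonneg (by linarith)] at this

lemma wronskian_const {p y z θ η : ℝ → ℂ} {α β : ℝ} (hαβ : α ≤ β)
    (hy : ∀ x ∈ Icc α β, HasDerivAt y (z x) x) (hz : ∀ x ∈ Icc α β, HasDerivAt z (p x * y x) x)
    (hθ : ∀ x ∈ Icc α β, HasDerivAt θ (η x) x) (hη : ∀ x ∈ Icc α β, HasDerivAt η (p x * θ x) x) :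
    z β * θ β - y β * η β = z α * θ α - y α * η α := by
  have := wronskian_bound (K := 0) hαβ hy hz hθ hη (fun x _ => by simp)
  rw [zero_mul] at this
  exact sub_eq_zero.1 (norm_le_zero_iff.1 this)

lemma ode_unique {p y z : ℝ → ℂ} (hp : Continuous p) {M : ℝ} (hM : ∀ x, ‖p x‖ ≤ M) {α β : ℝ}
    (hαβ : α ≤ β)
    (hy : ∀ x ∈ Icc α β, HasDerivAt y (z x) x) (hz : ∀ x ∈ Icc α β, HasDerivAt z (p x * y x) x)
    (h1 : y β = 0) (h2 : z β = 0) : y α = 0 ∧ z α = 0 := by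
  constructor
  · have := wronskian_const hαβ hy hz (fun x _ => solY_deriv (x0 := α) (a := 0) (b := 1) hp hM x)
      (fun x _ => solZ_deriv (x0 := α) (a := 0) (b := 1) hp hM x)
    simpa [solY_init, solZ_init, h1, h2] using this
  · have := wronskian_const hαβ hy hz (fun x _ => solY_deriv (x0 := α) (a := 1) (b := 0) hp hM x)
      (fun x _ => solZ_deriv (x0 := α) (a := 1) (b := 0) hp hM x)
    simpa [solY_init, solZ_init, h1, h2] using this.symm

section HL
variable {q1 q2 : ℝ → ℝ} {M : ℝ}

lemma tendsto_zero_of_div {f : ℝ → ℂ} {K N : ℝ} (h : ∀ k, N ≤ k → ‖f k‖ ≤ K / k) :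
    Tendsto f atTop (𝓝 0) := by
  refine squeeze_zero_norm' ((eventually_ge_atTop N).mono h) ?_
  exact tendsto_const_nhds.div_atTop tendsto_id

/-- Step 1: equal values at `1` for all `s` force equal derivatives at `1`. -/
lemma HL_step1 (hq1 : Continuous q1) (hq2 : Continuous q2) (hM1 : ∀ x, |q1 x| ≤ M)
    (hM2 : ∀ x, |q2 x| ≤ M) (hhalf : ∀ x, 1 / 2 ≤ x → q1 x = q2 x)
    (hD : ∀ s, solY (pot q1 s) 0 0 1 1 = solY (pot q2 s) 0 0 1 1) :
    ∀ s, solZ (pot q1 s) 0 0 1 1 - solZ (pot q2 s) 0 0 1 1 = 0 := by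
  have hM0 : 0 ≤ M := (abs_nonneg _).trans (hM1 0)
  refine PL_zero (B := 2 * Real.exp (2 * (M + 1))) (B' := 2) (C := 4 * Real.exp M)
    ((sol_differentiable hq1 hM1 0 0 1 1).2.sub (sol_differentiable hq2 hM2 0 0 1 1).2) ?_ ?_ ?_
  · intro w
    refine (norm_sub_le _ _).trans ?_
    have h1 := (growth hM1 (a := 0) (b := 1) (by simp) (by simp) (x := 1) (x0 := 0) (by simp) w).2
    have h2 := (growth hM2 (a := 0) (b := 1) (by simp) (by simp) (x := 1) (x0 := 0) (by simp) w).2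
    linarith
  · intro k hk
    refine (norm_sub_le _ _).trans ?_
    have h1 := negZ hq1 hM1 hk 0 1 (by simp)
    have h2 := negZ hq2 hM2 hk 0 1 (by simp)
    linarith
  · refine tendsto_zero_of_div (K := 108 * M) (N := M + 2) fun k hk => ?_
    have hk0 : 0 < k := by linarith
    set s : ℂ := (k : ℂ) ^ 2
    have d1 := fun x (_ : x ∈ Icc (0:ℝ) (1/2)) => solY_deriv (x0 := 0) (a := (0:ℂ)) (b := 1)
      (pot_cont hq1 s) (pot_bound hM1 s) x
    have d1' := fun x (_ : x ∈ Icc (0:ℝ) (1/2)) => solZ_deriv (x0 := 0) (a := (0:ℂ)) (b := 1)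
      (pot_cont hq1 s) (pot_bound hM1 s) x
    have d2 := fun x (_ : x ∈ Icc (0:ℝ) (1/2)) => solY_deriv (x0 := 0) (a := (0:ℂ)) (b := 1)
      (pot_cont hq2 s) (pot_bound hM2 s) x
    have d2' := fun x (_ : x ∈ Icc (0:ℝ) (1/2)) => solZ_deriv (x0 := 0) (a := (0:ℂ)) (b := 1)
      (pot_cont hq2 s) (pot_bound hM2 s) x
    have w1 := wronskian_bound (K := 2 * M * (9 / k ^ 2 * Real.exp k)) (by norm_num) d1 d1' d2 d2'
      (fun x hx => by
        rw [norm_mul]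
        have a1 : ‖pot q1 s x - pot q2 s x‖ ≤ 2 * M := by
          have : pot q1 s x - pot q2 s x = ((q1 x - q2 x : ℝ) : ℂ) := by simp [pot]
          rw [this, Complex.norm_real]
          refine (norm_sub_le _ _).trans ?_
          have := hM1 x
          have := hM2 x
          simp only [Real.norm_eq_abs]; linarith
        have hx1 : |x - 0| ≤ 1 := by
          rw [sub_zero, abs_of_nonneg hx.1]; linarith [hx.2]
        have b1 := posUpper hM1 hk hx1
        have b2 := posUpper hM2 hk hx1
        rw [sub_zero, abs_of_nonneg hx.1] at b1 b2
        refine mul_le_mul a1 ?_ (norm_nonneg _) (by positivity)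
        rw [norm_mul]
        refine (mul_le_mul b1 b2 (norm_nonneg _) (by positivity)).trans ?_
        have e1 : Real.exp (k * x) * Real.exp (k * x) ≤ Real.exp k := by
          rw [← Real.exp_add]; refine Real.exp_le_exp.2 ?_
          nlinarith [hx.2]
        calc 3 / k * Real.exp (k * x) * (3 / k * Real.exp (k * x))
            = 9 / k ^ 2 * (Real.exp (k * x) * Real.exp (k * x)) := by field_simp; ring
          _ ≤ _ := by gcongr)
    have w2 := wronskian_bound (K := 0) (p1 := pot q1 s) (p2 := pot q2 s) (α := 1 / 2) (β := 1)
      (by norm_num)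
      (fun x (_ : x ∈ Icc (1/2:ℝ) 1) => solY_deriv (x0 := 0) (a := (0:ℂ)) (b := 1)
        (pot_cont hq1 s) (pot_bound hM1 s) x)
      (fun x (_ : x ∈ Icc (1/2:ℝ) 1) => solZ_deriv (x0 := 0) (a := (0:ℂ)) (b := 1)
        (pot_cont hq1 s) (pot_bound hM1 s) x)
      (fun x (_ : x ∈ Icc (1/2:ℝ) 1) => solY_deriv (x0 := 0) (a := (0:ℂ)) (b := 1)
        (pot_cont hq2 s) (pot_bound hM2 s) x)
      (fun x (_ : x ∈ Icc (1/2:ℝ) 1) => solZ_deriv (x0 := 0) (a := (0:ℂ)) (b := 1)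
        (pot_cont hq2 s) (pot_bound hM2 s) x)
      (fun x hx => by simp [pot, hhalf x hx.1])
    rw [zero_mul] at w2
    have w2' := sub_eq_zero.1 (norm_le_zero_iff.1 w2)
    rw [← w2'] at w1
    simp only [solY_init, solZ_init] at w1
    rw [← hD s] at w1
    have lower := posLower hq1 hM1 hk (x := 1) (by norm_num) le_rfl
    rw [mul_one] at lower
    change _ ≤ 12 * k * ‖solY (pot q1 s) 0 0 1 1‖ at lower
    have w3 : ‖solZ (pot q1 s) 0 0 1 1 - solZ (pot q2 s) 0 0 1 1‖ * ‖solY (pot q1 s) 0 0 1 1‖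
        ≤ 9 * M / k ^ 2 * Real.exp k := by
      rw [← norm_mul]
      refine (le_of_eq ?_).trans (w1.trans (le_of_eq ?_))
      · congr 1; ring
      · ring
    set g := ‖solZ (pot q1 s) 0 0 1 1 - solZ (pot q2 s) 0 0 1 1‖
    set D := ‖solY (pot q1 s) 0 0 1 1‖
    have hg : 0 ≤ g := norm_nonneg _
    have h1 : g * Real.exp k ≤ 108 * M / k * Real.exp k := by
      calc g * Real.exp k ≤ g * (12 * k * D) := by gcongr
        _ = 12 * k * (g * D) := by ring
        _ ≤ 12 * k * (9 * M / k ^ 2 * Real.exp k) := by gcongr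
        _ = _ := by field_simp; ring
    exact le_of_mul_le_mul_right h1 (Real.exp_pos k)

/-- Step 2: proportionality of the fundamental systems based at `1/2`. -/
lemma HL_step2 (hq1 : Continuous q1) (hq2 : Continuous q2) (hM1 : ∀ x, |q1 x| ≤ M)
    (hM2 : ∀ x, |q2 x| ≤ M)
    (hY : ∀ s, solY (pot q1 s) 0 0 1 (1/2) = solY (pot q2 s) 0 0 1 (1/2))
    (hZ : ∀ s, solZ (pot q1 s) 0 0 1 (1/2) = solZ (pot q2 s) 0 0 1 (1/2))
    {x : ℝ} (hx : x ∈ Icc (0:ℝ) (1/2)) :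
    ∀ s, solY (pot q1 s) (1/2) 1 0 x * solY (pot q2 s) (1/2) 0 1 x -
      solY (pot q1 s) (1/2) 0 1 x * solY (pot q2 s) (1/2) 1 0 x = 0 := by
  have hxb : |x - 1/2| ≤ 1 := by rw [abs_le]; constructor <;> linarith [hx.1, hx.2]
  have hxb' : |x - 1/2| = 1/2 - x := by rw [abs_of_nonpos] <;> linarith [hx.2]
  have decomp : ∀ (q : ℝ → ℝ), Continuous q → (∀ x, |q x| ≤ M) → ∀ s,
      solY (pot q s) 0 0 1 x = solY (pot q s) 0 0 1 (1/2) * solY (pot q s) (1/2) 1 0 x +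
        solZ (pot q s) 0 0 1 (1/2) * solY (pot q s) (1/2) 0 1 x := by
    intro q hq hM s
    have dY := fun x0 a b x => solY_deriv (x0 := x0) (a := (a:ℂ)) (b := b)
      (pot_cont hq s) (pot_bound hM s) x
    have dZ := fun x0 a b x => solZ_deriv (x0 := x0) (a := (a:ℂ)) (b := b)
      (pot_cont hq s) (pot_bound hM s) x
    set A := solY (pot q s) 0 0 1 (1/2)
    set B := solZ (pot q s) 0 0 1 (1/2)
    have := (ode_unique (p := pot q s)
      (y := fun x => solY (pot q s) 0 0 1 x - (A * solY (pot q s) (1/2) 1 0 x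
        + B * solY (pot q s) (1/2) 0 1 x))
      (z := fun x => solZ (pot q s) 0 0 1 x - (A * solZ (pot q s) (1/2) 1 0 x
        + B * solZ (pot q s) (1/2) 0 1 x)) (pot_cont hq s) (pot_bound hM s) hx.2
      (fun x _ => (dY 0 0 1 x).sub (((dY (1/2) 1 0 x).const_mul A).add
        ((dY (1/2) 0 1 x).const_mul B)))
      (fun x _ => ((dZ 0 0 1 x).sub (((dZ (1/2) 1 0 x).const_mul A).add
        ((dZ (1/2) 0 1 x).const_mul B))).congr_deriv (by ring))
      (by simp only [solY_init]; simp only [A]; ring)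
      (by simp only [solZ_init]; simp only [B]; ring)).1
    exact sub_eq_zero.1 this
  have dif := fun (q : ℝ → ℝ) (hq : Continuous q) (hM : ∀ x, |q x| ≤ M) (a b : ℂ) =>
    (sol_differentiable hq hM (1/2) a b x).1
  refine PL_zero (B := 2 * Real.exp (2 * (M + 1)) ^ 2) (B' := 4) (C := 8 * Real.exp M ^ 2)
    (((dif q1 hq1 hM1 1 0).mul (dif q2 hq2 hM2 0 1)).sub
      ((dif q1 hq1 hM1 0 1).mul (dif q2 hq2 hM2 1 0))) ?_ ?_ ?_
  · intro w
    refine (norm_sub_le _ _).trans ?_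
    rw [norm_mul, norm_mul]
    have g1 := (growth hM1 (a := 1) (b := 0) (by simp) (by simp) hxb w).1
    have g2 := (growth hM2 (a := 0) (b := 1) (by simp) (by simp) hxb w).1
    have g3 := (growth hM1 (a := 0) (b := 1) (by simp) (by simp) hxb w).1
    have g4 := (growth hM2 (a := 1) (b := 0) (by simp) (by simp) hxb w).1
    have e : Real.exp (4 * ‖w‖) = Real.exp (2 * ‖w‖) * Real.exp (2 * ‖w‖) := by
      rw [← Real.exp_add]; ring_nf
    have m1 := mul_le_mul g1 g2 (norm_nonneg _) (by positivity)
    have m2 := mul_le_mul g3 g4 (norm_nonneg _) (by positivity)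
    rw [e]
    refine (add_le_add m1 m2).trans (le_of_eq (by ring))
  · intro k hk
    refine (norm_sub_le _ _).trans ?_
    rw [norm_mul, norm_mul]
    have g1 := negY hq1 hM1 hk (1/2) 1 0 x (by simp) (by simp) hxb
    have g2 := negY hq2 hM2 hk (1/2) 0 1 x (by simp) (by simp) hxb
    have g3 := negY hq1 hM1 hk (1/2) 0 1 x (by simp) (by simp) hxb
    have g4 := negY hq2 hM2 hk (1/2) 1 0 x (by simp) (by simp) hxb
    simp only [Complex.ofReal_zero, Complex.ofReal_one] at g1 g2 g3 g4
    have m1 := mul_le_mul g1 g2 (norm_nonneg _) (by positivity)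
    have m2 := mul_le_mul g3 g4 (norm_nonneg _) (by positivity)
    refine (add_le_add m1 m2).trans (le_of_eq (by ring))
  · refine tendsto_zero_of_div (K := 216) (N := M + 2) fun k hk => ?_
    have hM0 : 0 ≤ M := (abs_nonneg _).trans (hM1 0)
    have hk0 : 0 < k := by linarith
    set s : ℂ := (k : ℂ) ^ 2
    have hx1 : |x - 0| ≤ 1 := by
      rw [sub_zero, abs_of_nonneg hx.1]; linarith [hx.2]
    have b1 := posUpper hM1 hk hx1
    have b2 := posUpper hM2 hk hx1
    have c1 := posUpper hM1 hk hxb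
    have c2 := posUpper hM2 hk hxb
    rw [sub_zero, abs_of_nonneg hx.1] at b1 b2
    rw [hxb'] at c1 c2
    have lower := posLower hq1 hM1 hk (x := 1/2) le_rfl (by norm_num)
    change _ ≤ 12 * k * ‖solY (pot q1 s) 0 0 1 (1/2)‖ at lower
    have id1 : (solY (pot q1 s) (1/2) 1 0 x * solY (pot q2 s) (1/2) 0 1 x -
      solY (pot q1 s) (1/2) 0 1 x * solY (pot q2 s) (1/2) 1 0 x) * solY (pot q1 s) 0 0 1 (1/2) =
      solY (pot q1 s) 0 0 1 x * solY (pot q2 s) (1/2) 0 1 x -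
      solY (pot q1 s) (1/2) 0 1 x * solY (pot q2 s) 0 0 1 x := by
      rw [decomp q1 hq1 hM1 s, decomp q2 hq2 hM2 s, ← hY s, ← hZ s]; ring
    have w3 := congrArg norm id1
    rw [norm_mul] at w3
    have w4 := norm_sub_le (solY (pot q1 s) 0 0 1 x * solY (pot q2 s) (1/2) 0 1 x)
      (solY (pot q1 s) (1/2) 0 1 x * solY (pot q2 s) 0 0 1 x)
    rw [norm_mul (solY (pot q1 s) 0 0 1 x), norm_mul (solY (pot q1 s) (1/2) 0 1 x)] at w4
    have m1 := mul_le_mul b1 c2 (norm_nonneg _) (by positivity)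
    have m2 := mul_le_mul c1 b2 (norm_nonneg _) (by positivity)
    have ee : Real.exp (k * x) * Real.exp (k * (1/2 - x)) = Real.exp (k * (1/2)) := by
      rw [← Real.exp_add]; ring_nf
    have w5 : ‖solY (pot q1 s) (1/2) 1 0 x * solY (pot q2 s) (1/2) 0 1 x -
      solY (pot q1 s) (1/2) 0 1 x * solY (pot q2 s) (1/2) 1 0 x‖ *
        ‖solY (pot q1 s) 0 0 1 (1/2)‖ ≤ 18 / k ^ 2 * Real.exp (k * (1/2)) := by
      rw [w3, ← ee]
      refine w4.trans ((add_le_add m1 m2).trans (le_of_eq ?_))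
      field_simp; ring
    set g := ‖solY (pot q1 s) (1/2) 1 0 x * solY (pot q2 s) (1/2) 0 1 x -
      solY (pot q1 s) (1/2) 0 1 x * solY (pot q2 s) (1/2) 1 0 x‖
    set D := ‖solY (pot q1 s) 0 0 1 (1/2)‖
    have hg : 0 ≤ g := norm_nonneg _
    have h1 : g * Real.exp (k * (1/2)) ≤ 216 / k * Real.exp (k * (1/2)) := by
      calc g * Real.exp (k * (1/2)) ≤ g * (12 * k * D) := by gcongr
        _ = 12 * k * (g * D) := by ring
        _ ≤ 12 * k * (18 / k ^ 2 * Real.exp (k * (1/2))) := by gcongr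
        _ = _ := by field_simp; ring
    exact le_of_mul_le_mul_right h1 (Real.exp_pos _)

lemma sq_eq_pot {p1 p2 y1 z1 y2 z2 : ℝ → ℂ}
    (h1 : ∀ x, HasDerivAt y1 (z1 x) x) (h1' : ∀ x, HasDerivAt z1 (p1 x * y1 x) x)
    (h2 : ∀ x, HasDerivAt y2 (z2 x) x) (h2' : ∀ x, HasDerivAt z2 (p2 x * y2 x) x)
    {U : Set ℝ} (hU : IsOpen U) (he : ∀ x ∈ U, y1 x ^ 2 = y2 x ^ 2) :
    ∀ x ∈ U, y1 x ≠ 0 → p1 x = p2 x := by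
  have e1 : ∀ x ∈ U, y1 x * z1 x = y2 x * z2 x := by
    intro x hx
    have a := (h1 x).pow 2
    have b := (h2 x).pow 2
    have c : y1 ^ 2 =ᶠ[𝓝 x] y2 ^ 2 := by
      filter_upwards [hU.mem_nhds hx] with t ht using he t ht
    have := a.unique (b.congr_of_eventuallyEq c)
    push_cast at this
    simp only [Nat.add_one_sub_one, pow_one] at this
    linear_combination this / 2
  intro x hx hne
  have a := (h1 x).mul (h1' x)
  have b := (h2 x).mul (h2' x)
  have c : y1 * z1 =ᶠ[𝓝 x] y2 * z2 := by
    filter_upwards [hU.mem_nhds hx] with t ht using e1 t ht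
  have e2 := a.unique (b.congr_of_eventuallyEq c)
  have e0 := he x hx
  have e1 := e1 x hx
  have hf : (p1 x - p2 x) * (y1 x ^ 2 * y1 x ^ 2) = 0 := by
    linear_combination (y1 x ^ 2) * e2 - (y1 x * z1 x + y2 x * z2 x) * e1
      + (z2 x ^ 2 - p2 x * y1 x ^ 2) * e0
  have : y1 x ^ 2 * y1 x ^ 2 ≠ 0 := by positivity
  exact sub_eq_zero.1 ((mul_eq_zero.1 hf).resolve_right this)

theorem HL (hq1 : Continuous q1) (hq2 : Continuous q2) (hM1 : ∀ x, |q1 x| ≤ M)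
    (hM2 : ∀ x, |q2 x| ≤ M) (hhalf : ∀ x, 1 / 2 ≤ x → q1 x = q2 x)
    (hD : ∀ s, solY (pot q1 s) 0 0 1 1 = solY (pot q2 s) 0 0 1 1) :
    ∀ x ∈ Ioo (0:ℝ) (1/2), q1 x = q2 x := by
  have hG := HL_step1 hq1 hq2 hM1 hM2 hhalf hD
  have hpp : ∀ s x, 1/2 ≤ x → pot q1 s x = pot q2 s x := fun s x hx => by simp [pot, hhalf x hx]
  have at_half : ∀ s, solY (pot q1 s) 0 0 1 (1/2) - solY (pot q2 s) 0 0 1 (1/2) = 0 ∧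
      solZ (pot q1 s) 0 0 1 (1/2) - solZ (pot q2 s) 0 0 1 (1/2) = 0 := by
    intro s
    refine ode_unique (p := pot q1 s) (α := 1/2) (β := 1)
      (y := fun x => solY (pot q1 s) 0 0 1 x - solY (pot q2 s) 0 0 1 x)
      (z := fun x => solZ (pot q1 s) 0 0 1 x - solZ (pot q2 s) 0 0 1 x)
      (pot_cont hq1 s) (pot_bound hM1 s) (by norm_num)
      (fun x _ => (solY_deriv (pot_cont hq1 s) (pot_bound hM1 s) x).sub
        (solY_deriv (pot_cont hq2 s) (pot_bound hM2 s) x))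
      (fun x hx => ((solZ_deriv (pot_cont hq1 s) (pot_bound hM1 s) x).sub
        (solZ_deriv (pot_cont hq2 s) (pot_bound hM2 s) x)).congr_deriv ?_) ?_ (hG s)
    · rw [← hpp s x hx.1]; ring
    · exact sub_eq_zero.2 (hD s)
  have hP := fun x (hx : x ∈ Icc (0:ℝ) (1/2)) => HL_step2 hq1 hq2 hM1 hM2
    (fun s => sub_eq_zero.1 (at_half s).1) (fun s => sub_eq_zero.1 (at_half s).2) hx 0
  have d1 := fun a b x => solY_deriv (x0 := 1/2) (a := (a:ℂ)) (b := b)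
      (pot_cont hq1 0) (pot_bound hM1 0) x
  have d1' := fun a b x => solZ_deriv (x0 := 1/2) (a := (a:ℂ)) (b := b)
      (pot_cont hq1 0) (pot_bound hM1 0) x
  have d2 := fun a b x => solY_deriv (x0 := 1/2) (a := (a:ℂ)) (b := b)
      (pot_cont hq2 0) (pot_bound hM2 0) x
  have d2' := fun a b x => solZ_deriv (x0 := 1/2) (a := (a:ℂ)) (b := b)
      (pot_cont hq2 0) (pot_bound hM2 0) x
  have W1 : ∀ x ∈ Ioo (0:ℝ) (1/2), solZ (pot q1 0) (1/2) 1 0 x * solY (pot q1 0) (1/2) 0 1 x -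
      solY (pot q1 0) (1/2) 1 0 x * solZ (pot q1 0) (1/2) 0 1 x = -1 := by
    intro x hx
    have := wronskian_const hx.2.le (fun x _ => d1 1 0 x) (fun x _ => d1' 1 0 x)
      (fun x _ => d1 0 1 x) (fun x _ => d1' 0 1 x)
    rw [← this]; simp [solY_init, solZ_init]
  have W2 : ∀ x ∈ Ioo (0:ℝ) (1/2), solZ (pot q2 0) (1/2) 1 0 x * solY (pot q2 0) (1/2) 0 1 x -
      solY (pot q2 0) (1/2) 1 0 x * solZ (pot q2 0) (1/2) 0 1 x = -1 := by
    intro x hx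
    have := wronskian_const hx.2.le (fun x _ => d2 1 0 x) (fun x _ => d2' 1 0 x)
      (fun x _ => d2 0 1 x) (fun x _ => d2' 0 1 x)
    rw [← this]; simp [solY_init, solZ_init]
  have P' : ∀ x ∈ Ioo (0:ℝ) (1/2),
      (solZ (pot q1 0) (1/2) 1 0 x * solY (pot q2 0) (1/2) 0 1 x +
       solY (pot q1 0) (1/2) 1 0 x * solZ (pot q2 0) (1/2) 0 1 x) -
      (solZ (pot q1 0) (1/2) 0 1 x * solY (pot q2 0) (1/2) 1 0 x +
       solY (pot q1 0) (1/2) 0 1 x * solZ (pot q2 0) (1/2) 1 0 x) = 0 := by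
    intro x hx
    have a := ((d1 1 0 x).mul (d2 0 1 x)).sub ((d1 0 1 x).mul (d2 1 0 x))
    refine a.unique ((hasDerivAt_const x (0:ℂ)).congr_of_eventuallyEq ?_)
    filter_upwards [isOpen_Ioo.mem_nhds hx] with t ht
    exact hP t ⟨ht.1.le, ht.2.le⟩
  have sq1 : ∀ x ∈ Ioo (0:ℝ) (1/2), solY (pot q1 0) (1/2) 1 0 x ^ 2 =
      solY (pot q2 0) (1/2) 1 0 x ^ 2 := by
    intro x hx
    have a := hP x ⟨hx.1.le, hx.2.le⟩
    have b := P' x hx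
    have c := W1 x hx
    have d := W2 x hx
    set χ1 := solY (pot q1 0) (1/2) 1 0 x
    set χ2 := solY (pot q2 0) (1/2) 1 0 x
    set χ1' := solZ (pot q1 0) (1/2) 1 0 x
    set χ2' := solZ (pot q2 0) (1/2) 1 0 x
    linear_combination χ1 * χ2 * b + χ1 ^ 2 * d - χ2 ^ 2 * c - (χ2 * χ1' + χ1 * χ2') * a
  have sq2 : ∀ x ∈ Ioo (0:ℝ) (1/2), solY (pot q1 0) (1/2) 0 1 x ^ 2 =
      solY (pot q2 0) (1/2) 0 1 x ^ 2 := by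
    intro x hx
    have a := hP x ⟨hx.1.le, hx.2.le⟩
    have b := P' x hx
    have c := W1 x hx
    have d := W2 x hx
    set χ1 := solY (pot q1 0) (1/2) 1 0 x
    set χ2 := solY (pot q2 0) (1/2) 1 0 x
    set ψ1 := solY (pot q1 0) (1/2) 0 1 x
    set ψ2 := solY (pot q2 0) (1/2) 0 1 x
    set ψ1' := solZ (pot q1 0) (1/2) 0 1 x
    set ψ2' := solZ (pot q2 0) (1/2) 0 1 x
    linear_combination ψ1 * ψ2 * b + ψ1 ^ 2 * d - ψ2 ^ 2 * c - (ψ1 * ψ2' + ψ2 * ψ1') * a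
  intro x hx
  have hpq : pot q1 0 x = pot q2 0 x := by
    by_cases h : solY (pot q1 0) (1/2) 1 0 x = 0
    · refine sq_eq_pot (fun x => d1 0 1 x) (fun x => d1' 0 1 x) (fun x => d2 0 1 x)
        (fun x => d2' 0 1 x) isOpen_Ioo sq2 x hx ?_
      intro h'
      have := W1 x hx
      rw [h, h'] at this
      simp at this
    · exact sq_eq_pot (fun x => d1 1 0 x) (fun x => d1' 1 0 x) (fun x => d2 1 0 x)
        (fun x => d2' 1 0 x) isOpen_Ioo sq1 x hx h
  simpa [pot] using hpq

end HL

theorem second_order_max {f f' : ℝ → ℝ} {x0 f2 : ℝ} (h1 : ∀ᶠ x in 𝓝 x0, HasDerivAt f (f' x) x)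
    (h2 : HasDerivAt f' f2 x0) (hm : IsLocalMax f x0) : f2 ≤ 0 := by
  by_contra hc
  push Not at hc
  have hd : deriv f =ᶠ[𝓝 x0] f' := h1.mono fun x hx => hx.deriv
  have hd2 : deriv (deriv f) x0 = f2 := by rw [hd.deriv_eq]; exact h2.deriv
  have hd1 : deriv f x0 = 0 := hm.deriv_eq_zero
  have hmin := isLocalMin_of_deriv_deriv_pos (by rw [hd2]; exact hc) hd1 h1.self_of_nhds.continuousAt
  have hcst : f =ᶠ[𝓝 x0] fun _ => f x0 := by
    filter_upwards [hm, hmin] with x ha hb using le_antisymm ha hb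
  have h3 : deriv f =ᶠ[𝓝 x0] fun _ => 0 := by
    have := hcst.deriv
    simpa using this
  have : deriv (deriv f) x0 = 0 := by rw [h3.deriv_eq]; simp
  linarith

noncomputable def rsum (u : ℝ → ℝ → ℝ) (h : ℝ) (n : ℕ) (x t : ℝ) : ℝ :=
  (h / n) * ∑ i ∈ Finset.range n, u x (t + i * (h / n))

theorem rsum_approx {u : ℝ → ℝ → ℝ} (hu : Continuous (fun p : ℝ × ℝ => u p.1 p.2)) {h T : ℝ} (hh : 0 < h)
    {ε : ℝ} (hε : 0 < ε) : ∃ n : ℕ, 0 < n ∧ ∀ x ∈ Icc (0:ℝ) 1, ∀ t ∈ Icc (0:ℝ) T,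
      |rsum u h n x t - ∫ s in (0:ℝ)..h, u x (t + s)| ≤ ε := by
  have hK : IsCompact (Icc (0:ℝ) 1 ×ˢ Icc (0:ℝ) (T + h)) := isCompact_Icc.prod isCompact_Icc
  have huc := hK.uniformContinuousOn_of_continuous hu.continuousOn
  rw [Metric.uniformContinuousOn_iff] at huc
  obtain ⟨d, hd, hud⟩ := huc (ε / h) (by positivity)
  obtain ⟨n, hn⟩ := exists_nat_gt (h / d)
  have hn0 : (0:ℝ) < n := lt_trans (by positivity) hn
  refine ⟨n, by exact_mod_cast hn0, fun x hx t ht => ?_⟩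
  have hst : h / n < d := by
    rw [div_lt_iff₀ hn0]; rw [div_lt_iff₀ hd] at hn; linarith
  have hst0 : 0 < h / n := by positivity
  have hcont : Continuous fun s => u x (t + s) := hu.comp (by fun_prop : Continuous fun s : ℝ => (x, t + s))
  have hsum := intervalIntegral.sum_integral_adjacent_intervals (μ := volume) (f := fun s => u x (t + s))
    (a := fun i : ℕ => (i:ℝ) * (h / n)) (n := n) (fun k _ => hcont.intervalIntegrable _ _)
  have e1 : (n:ℝ) * (h / n) = h := by field_simp
  simp only [Nat.cast_zero, zero_mul, e1] at hsum
  rw [← hsum, rsum, Finset.mul_sum, ← Finset.sum_sub_distrib]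
  refine (Finset.abs_sum_le_sum_abs _ _).trans ?_
  have : ∀ i ∈ Finset.range n, |h / n * u x (t + i * (h / n)) - ∫ s in (i:ℝ) * (h / n)..((i+1:ℕ):ℝ) * (h / n), u x (t + s)| ≤ ε / n := by
    intro i hi
    have hin : ((i:ℝ) + 1) ≤ n := by exact_mod_cast Finset.mem_range.1 hi
    have hle : ((i:ℝ)+1) * (h / n) ≤ h := by
      calc ((i:ℝ)+1) * (h / n) ≤ n * (h / n) := by gcongr
        _ = h := e1
    have e2 : h / n * u x (t + i * (h / n)) = ∫ s in (i:ℝ) * (h / n)..((i+1:ℕ):ℝ) * (h / n), u x (t + i * (h / n)) := by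
      rw [intervalIntegral.integral_const]; push_cast; rw [smul_eq_mul]; ring
    rw [e2, ← intervalIntegral.integral_sub (by simp) (hcont.intervalIntegrable _ _)]
    have := intervalIntegral.norm_integral_le_of_norm_le_const (a := (i:ℝ) * (h / n)) (b := ((i+1:ℕ):ℝ) * (h / n)) (C := ε / h)
      (f := fun s => u x (t + i * (h / n)) - u x (t + s)) (by
        intro s hs
        push_cast at hs
        rw [uIoc_of_le (by nlinarith)] at hs
        have hi0 : 0 ≤ (i:ℝ) * (h / n) := by positivity
        have := hud (x, t + i * (h / n)) ⟨hx, by constructor <;> simp <;> nlinarith [ht.1, ht.2]⟩ (x, t + s)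
          ⟨hx, by constructor <;> simp <;> nlinarith [ht.1, ht.2, hs.1, hs.2]⟩ (by
            rw [Prod.dist_eq, dist_self, max_eq_right dist_nonneg, Real.dist_eq, abs_lt]
            constructor <;> nlinarith [hs.1, hs.2])
        rw [Real.dist_eq] at this
        exact this.le)
    rw [Real.norm_eq_abs] at this
    refine this.trans (le_of_eq ?_)
    push_cast
    rw [show ((i:ℝ) + 1) * (h / n) - i * (h / n) = h / n by ring, abs_of_pos hst0]
    field_simp
  refine (Finset.sum_le_sum this).trans (le_of_eq ?_)
  simp; field_simp

noncomputable def vint (u : ℝ → ℝ → ℝ) (h x t : ℝ) : ℝ := ∫ s in (0:ℝ)..h, u x (t + s)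

theorem vint_cont {u : ℝ → ℝ → ℝ} (hu : Continuous (fun p : ℝ × ℝ => u p.1 p.2)) (h : ℝ) :
    Continuous (fun p : ℝ × ℝ => vint u h p.1 p.2) := by
  unfold vint
  apply intervalIntegral.continuous_parametric_intervalIntegral_of_continuous'
  exact hu.comp (by fun_prop : Continuous fun z : (ℝ × ℝ) × ℝ => (z.1.1, z.1.2 + z.2))

theorem vint_deriv {u : ℝ → ℝ → ℝ} (hu : Continuous (fun p : ℝ × ℝ => u p.1 p.2)) (h x t : ℝ) :
    HasDerivAt (fun t => vint u h x t) (u x (t + h) - u x t) t := by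
  have hc : Continuous (u x) := hu.comp (by fun_prop : Continuous fun s : ℝ => (x, s))
  have e : (fun t => vint u h x t) = fun t => (∫ s in (0:ℝ)..(t+h), u x s) - ∫ s in (0:ℝ)..t, u x s := by
    ext t
    rw [vint, intervalIntegral.integral_comp_add_left (fun s => u x s) t,
      intervalIntegral.integral_interval_sub_left (hc.intervalIntegrable _ _) (hc.intervalIntegrable _ _)]
    simp
  rw [e]
  have h1 : ∀ t, HasDerivAt (fun t => ∫ s in (0:ℝ)..t, u x s) (u x t) t := fun t =>
    intervalIntegral.integral_hasDerivAt_right (hc.intervalIntegrable _ _) (hc.stronglyMeasurableAtFilter _ _) hc.continuousAt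
  exact ((h1 (t+h)).comp_add_const t h).sub (h1 t)

theorem vint_lip {u : ℝ → ℝ → ℝ} (hu : Continuous (fun p : ℝ × ℝ => u p.1 p.2)) {h t1 L : ℝ} (hh : 0 < h)
    (hL : ∀ t, 0 < t → t ≤ t1 + h + 1 → ∀ x ∈ Icc (0:ℝ) 1, ∀ y ∈ Icc (0:ℝ) 1, |u x t - u y t| ≤ L * |x - y|)
    {x x0 t : ℝ} (hx : x ∈ Icc (0:ℝ) 1) (hx0 : x0 ∈ Icc (0:ℝ) 1) (ht1 : 0 < t1) (ht : 0 < t) (htt : t ≤ t1 + 1) :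
    |(vint u h x t - vint u h x0 t) - (vint u h x t1 - vint u h x0 t1)| ≤ 2 * L * |x - x0| * |t - t1| := by
  have := Convex.norm_image_sub_le_of_norm_hasDerivWithin_le (𝕜 := ℝ) (f := fun t => vint u h x t - vint u h x0 t)
    (f' := fun t => (u x (t + h) - u x t) - (u x0 (t + h) - u x0 t)) (s := Ioc 0 (t1+1)) (x := t1) (y := t)
    (C := 2 * L * |x - x0|) (fun τ _ => ((vint_deriv hu h x τ).sub (vint_deriv hu h x0 τ)).hasDerivWithinAt)
    (fun τ hτ => by
      have a1 := abs_le.1 (hL (τ + h) (by linarith [hτ.1]) (by linarith [hτ.2]) x hx x0 hx0)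
      have a2 := abs_le.1 (hL τ hτ.1 (by linarith [hτ.2]) x hx x0 hx0)
      rw [Real.norm_eq_abs, abs_le]
      constructor <;> linarith) (convex_Ioc _ _) ⟨ht1, by linarith⟩ ⟨ht, htt⟩
  simpa [Real.norm_eq_abs] using this

/-- Interior classical heat equation with separately differentiable `u`. -/
def HeatInt (q : ℝ → ℝ) (u ux uxx ut : ℝ → ℝ → ℝ) : Prop :=
  ∀ x ∈ Ioo (0:ℝ) 1, ∀ t, 0 < t → HasDerivAt (fun y => u y t) (ux x t) x ∧
    HasDerivAt (fun y => ux y t) (uxx x t) x ∧ HasDerivAt (fun s => u x s) (ut x t) t ∧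
    ut x t = uxx x t - q x * u x t

theorem HeatInt.neg {q : ℝ → ℝ} {u ux uxx ut : ℝ → ℝ → ℝ} (H : HeatInt q u ux uxx ut) :
    HeatInt q (fun x t => - u x t) (fun x t => - ux x t) (fun x t => - uxx x t) (fun x t => - ut x t) := by
  intro x hx t ht
  obtain ⟨a, b, c, d⟩ := H x hx t ht
  exact ⟨a.neg, b.neg, c.neg, by simp only [d]; ring⟩

theorem visc_contra {q : ℝ → ℝ} {u ux uxx ut : ℝ → ℝ → ℝ} (H : HeatInt q u ux uxx ut)
    (hq : Continuous q) (hu : Continuous (fun p : ℝ × ℝ => u p.1 p.2)) {h t1 L : ℝ} (hh : 0 < h) (ht1 : 0 < t1)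
    (hL : ∀ t, 0 < t → t ≤ t1 + h + 1 → ∀ x ∈ Icc (0:ℝ) 1, ∀ y ∈ Icc (0:ℝ) 1, |u x t - u y t| ≤ L * |x - y|)
    {η x0 : ℝ} (hη : 0 < η) (hx0 : x0 ∈ Ioo (0:ℝ) 1) {ψ ψ1 ψ2 : ℝ → ℝ}
    (hψ : ∀ x, HasDerivAt ψ (ψ1 x) x) (hψ1 : ∀ x, HasDerivAt ψ1 (ψ2 x) x)
    (hψ2 : ∀ x ∈ Icc (0:ℝ) 1, ψ2 x ≤ u x (t1 + h) - u x t1 + q x * vint u h x t1 - η)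
    (hle : ∀ x ∈ Icc (0:ℝ) 1, vint u h x t1 ≤ ψ x - η / 2 * (x - x0)^2)
    (heq : vint u h x0 t1 = ψ x0) : False := by
  set K : ℝ := 4 * L^2 / η + 1 with hK
  have hv := vint_cont hu h
  have hx0' : x0 ∈ Icc (0:ℝ) 1 := ⟨hx0.1.le, hx0.2.le⟩
  -- the error function
  let F : ℝ × ℝ → ℝ := fun p => (u p.1 (t1 + h) - u x0 (p.2 + h)) - (u p.1 t1 - u x0 p.2)
    + q p.1 * (vint u h p.1 t1 - vint u h p.1 p.2) - 2 * K * (p.2 - t1)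
  have hF : Continuous F := by
    have c1 : Continuous fun p : ℝ × ℝ => u p.1 (t1 + h) := hu.comp (by fun_prop : Continuous fun p : ℝ × ℝ => (p.1, t1 + h))
    have c2 : Continuous fun p : ℝ × ℝ => u x0 (p.2 + h) := hu.comp (by fun_prop : Continuous fun p : ℝ × ℝ => (x0, p.2 + h))
    have c3 : Continuous fun p : ℝ × ℝ => u p.1 t1 := hu.comp (by fun_prop : Continuous fun p : ℝ × ℝ => (p.1, t1))
    have c4 : Continuous fun p : ℝ × ℝ => u x0 p.2 := hu.comp (by fun_prop : Continuous fun p : ℝ × ℝ => (x0, p.2))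
    have c5 : Continuous fun p : ℝ × ℝ => vint u h p.1 t1 := hv.comp (by fun_prop : Continuous fun p : ℝ × ℝ => (p.1, t1))
    have c6 : Continuous fun p : ℝ × ℝ => q p.1 := hq.comp continuous_fst
    exact (((c1.sub c2).sub (c3.sub c4)).add (c6.mul (c5.sub hv))).sub (by fun_prop)
  have hF0 : F (x0, t1) = 0 := by simp [F]
  obtain ⟨d, hd, hFd⟩ := Metric.continuous_iff.1 hF (x0, t1) (η / 2) (by positivity)
  rw [hF0] at hFd
  obtain ⟨Q, hQ⟩ := isCompact_Icc.exists_bound_of_continuousOn (s := Icc (0:ℝ) 1) hq.continuousOn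
  have hQ0 : 0 ≤ Q := (norm_nonneg _).trans (hQ x0 hx0')
  obtain ⟨δ, hδ0, hδd, hδ1, hδt, hδx, hδx'⟩ : ∃ δ : ℝ, 0 < δ ∧ δ < d ∧ δ ≤ 1 ∧ δ < t1 ∧ δ < x0 ∧ δ < 1 - x0 := by
    refine ⟨min (min (d/2) (min 1 (t1/2))) (min (x0/2) ((1-x0)/2)), ?_, ?_, ?_, ?_, ?_, ?_⟩
    · have := hx0.1; have := hx0.2
      simp only [lt_min_iff]; refine ⟨⟨?_, ?_, ?_⟩, ?_, ?_⟩ <;> linarith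
    · exact lt_of_le_of_lt ((min_le_left _ _).trans (min_le_left _ _)) (by linarith)
    · exact (min_le_left _ _).trans ((min_le_right _ _).trans (min_le_left _ _))
    · exact lt_of_le_of_lt ((min_le_left _ _).trans ((min_le_right _ _).trans (min_le_right _ _))) (by linarith)
    · exact lt_of_le_of_lt ((min_le_right _ _).trans (min_le_left _ _)) (by linarith [hx0.1])
    · exact lt_of_le_of_lt ((min_le_right _ _).trans (min_le_right _ _)) (by linarith [hx0.2])
  set μ : ℝ := min (η/4) 1 * δ^2 with hμ
  have hμ0 : 0 < μ := by positivity
  obtain ⟨ε, hε0, hεμ, hεQ⟩ : ∃ ε : ℝ, 0 < ε ∧ ε < μ / 2 ∧ Q * ε ≤ η / 2 := by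
    refine ⟨min (μ/4) (η / 2 / (Q+1)), by positivity, lt_of_le_of_lt (min_le_left _ _) (by linarith), ?_⟩
    calc Q * min (μ/4) (η / 2 / (Q+1)) ≤ (Q+1) * (η / 2 / (Q+1)) := by
          gcongr
          · linarith
          · exact min_le_right _ _
      _ = η / 2 := by field_simp
  obtain ⟨n, hn, hnε⟩ := rsum_approx hu (T := t1 + 1) hh hε0
  have hbx : ∀ x ∈ Icc (x0 - δ) (x0 + δ), x ∈ Ioo (0:ℝ) 1 := fun x hx => ⟨by linarith [hx.1], by linarith [hx.2]⟩
  have hbt : ∀ t ∈ Icc (t1 - δ) (t1 + δ), 0 < t ∧ t ≤ t1 + 1 := fun x hx => ⟨by linarith [hx.1], by linarith [hx.2]⟩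
  let Θ : ℝ × ℝ → ℝ := fun p => rsum u h n p.1 p.2 - ψ p.1 - vint u h x0 p.2 + vint u h x0 t1 - K * (p.2 - t1)^2
  have hψc : Continuous ψ := continuous_iff_continuousAt.2 fun x => (hψ x).continuousAt
  have hΘc : Continuous Θ := by
    have c1 : Continuous fun p : ℝ × ℝ => rsum u h n p.1 p.2 := by
      unfold rsum
      refine continuous_const.mul (continuous_finsetSum _ fun i _ => ?_)
      exact hu.comp (by fun_prop : Continuous fun p : ℝ × ℝ => (p.1, p.2 + i * (h / n)))
    have c2 : Continuous fun p : ℝ × ℝ => vint u h x0 p.2 := hv.comp (by fun_prop : Continuous fun p : ℝ × ℝ => (x0, p.2))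
    exact (((c1.sub (hψc.comp continuous_fst)).sub c2).add continuous_const).sub (by fun_prop)
  have hΘle : ∀ x ∈ Icc (x0 - δ) (x0 + δ), ∀ t ∈ Icc (t1 - δ) (t1 + δ),
      Θ (x, t) ≤ ε - (η/4 * (x-x0)^2 + (t-t1)^2) := by
    intro x hx t ht
    have hx1 := hbx x hx
    have hxI : x ∈ Icc (0:ℝ) 1 := ⟨hx1.1.le, hx1.2.le⟩
    have h1 := (abs_le.1 (hnε x hxI t ⟨(hbt t ht).1.le, (hbt t ht).2⟩)).2
    have h2 := (abs_le.1 (vint_lip hu hh hL hxI hx0' ht1 (hbt t ht).1 (hbt t ht).2)).2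
    have h3 := hle x hxI
    have h4 : 2 * L * |x - x0| * |t - t1| ≤ η/4 * (x-x0)^2 + 4 * L^2/η * (t-t1)^2 := by
      have : 0 ≤ (η / 2 * |x-x0| - 2 * L * |t-t1|)^2 / η := by positivity
      have e : (η / 2 * |x-x0| - 2 * L * |t-t1|)^2 / η = η/4 * |x-x0|^2 + 4 * L^2/η * |t-t1|^2 - 2 * L * |x - x0| * |t - t1| := by
        field_simp; ring
      rw [e, sq_abs, sq_abs] at this
      linarith
    change rsum u h n x t - (∫ s in (0:ℝ)..h, u x (t + s)) ≤ ε at h1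
    change rsum u h n x t - ψ x - vint u h x0 t + vint u h x0 t1 - K * (t - t1)^2 ≤ _
    have e1 : (∫ s in (0:ℝ)..h, u x (t + s)) = vint u h x t := rfl
    rw [e1] at h1
    rw [hK]
    nlinarith
  have hΘ0 : -ε ≤ Θ (x0, t1) := by
    have h1 := (abs_le.1 (hnε x0 hx0' t1 ⟨ht1.le, by linarith⟩)).1
    have e1 : (∫ s in (0:ℝ)..h, u x0 (t1 + s)) = vint u h x0 t1 := rfl
    rw [e1] at h1
    change -ε ≤ rsum u h n x0 t1 - ψ x0 - vint u h x0 t1 + vint u h x0 t1 - K * (t1 - t1)^2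
    rw [sub_self, ← heq]; linarith
  obtain ⟨⟨xh, th⟩, hp, hmax⟩ := (isCompact_Icc.prod isCompact_Icc : IsCompact (Icc (x0 - δ) (x0 + δ) ×ˢ Icc (t1 - δ) (t1 + δ))).exists_isMaxOn
    ⟨(x0, t1), ⟨by constructor <;> simp <;> linarith, by constructor <;> simp <;> linarith⟩⟩ hΘc.continuousOn
  have hxh : xh ∈ Icc (x0 - δ) (x0 + δ) := hp.1
  have hth : th ∈ Icc (t1 - δ) (t1 + δ) := hp.2
  have hge : -ε ≤ Θ (xh, th) := hΘ0.trans (hmax (a := (x0, t1)) ⟨by constructor <;> simp <;> linarith, by constructor <;> simp <;> linarith⟩)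
  have hlt : η/4 * (xh-x0)^2 + (th-t1)^2 < μ := by
    have := hΘle xh hxh th hth
    linarith
  have hxlt : |xh - x0| < δ := by
    by_contra hc
    push Not at hc
    have : δ^2 ≤ (xh-x0)^2 := by rw [← sq_abs (xh-x0)]; gcongr
    have h5 : μ ≤ η/4 * (xh-x0)^2 := by
      rw [hμ]; gcongr; exact min_le_left _ _
    nlinarith [sq_nonneg (th-t1)]
  have htlt : |th - t1| < δ := by
    by_contra hc
    push Not at hc
    have : δ^2 ≤ (th-t1)^2 := by rw [← sq_abs (th-t1)]; gcongr
    have h5 : μ ≤ 1 * (th-t1)^2 := by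
      rw [hμ]; gcongr; exact min_le_right _ _
    nlinarith [mul_nonneg hη.le (sq_nonneg (xh-x0))]
  rw [abs_lt] at hxlt htlt
  have hxU : Icc (x0 - δ) (x0 + δ) ∈ 𝓝 xh := Icc_mem_nhds (by linarith) (by linarith)
  have htU : Icc (t1 - δ) (t1 + δ) ∈ 𝓝 th := Icc_mem_nhds (by linarith) (by linarith)
  have hxhI := hbx xh hxh
  have hxhI' : xh ∈ Icc (0:ℝ) 1 := ⟨hxhI.1.le, hxhI.2.le⟩
  have hth0 := (hbt th hth).1
  have hti : ∀ i : ℕ, 0 < th + i * (h / n) := fun i => by positivity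
  -- first order condition in time
  have hT : HasDerivAt (fun t => Θ (xh, t)) ((h / n) * ∑ i ∈ Finset.range n, ut xh (th + i * (h / n))
      - (u x0 (th + h) - u x0 th) - K * (2 * (th - t1))) th := by
    have d1 : HasDerivAt (fun t => rsum u h n xh t) ((h / n) * ∑ i ∈ Finset.range n, ut xh (th + i * (h / n))) th := by
      unfold rsum
      refine (HasDerivAt.fun_sum fun i _ => ?_).const_mul _
      exact (H xh hxhI _ (hti i)).2.2.1.comp_add_const th _
    have d2 := vint_deriv hu h x0 th
    have d3 : HasDerivAt (fun t => K * (t - t1)^2) (K * (2 * (th - t1))) th := by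
      have := (((hasDerivAt_id th).sub_const t1).pow 2).const_mul K
      simpa using this
    exact (((d1.sub_const (ψ xh)).sub d2).add_const (vint u h x0 t1)).sub d3
  have hTm : IsLocalMax (fun t => Θ (xh, t)) th := by
    filter_upwards [htU] with t ht using hmax (a := (xh, t)) ⟨hxh, ht⟩
  have eT := hTm.hasDerivAt_eq_zero hT
  -- second order condition in space
  have hXm : IsLocalMax (fun x => Θ (x, th)) xh := by
    filter_upwards [hxU] with t ht using hmax (a := (t, th)) ⟨ht, hth⟩
  have hX := second_order_max (f := fun x => Θ (x, th)) (x0 := xh)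
    (f' := fun x => (h / n) * ∑ i ∈ Finset.range n, ux x (th + i * (h / n)) - ψ1 x)
    (f2 := (h / n) * ∑ i ∈ Finset.range n, uxx xh (th + i * (h / n)) - ψ2 xh) (by
      filter_upwards [hxU] with x hx
      have d1 : HasDerivAt (fun x => rsum u h n x th) ((h / n) * ∑ i ∈ Finset.range n, ux x (th + i * (h / n))) x := by
        unfold rsum
        refine (HasDerivAt.fun_sum fun i _ => ?_).const_mul _
        exact (H x (hbx x hx) _ (hti i)).1
      exact (((d1.sub (hψ x)).sub_const (vint u h x0 th)).add_const (vint u h x0 t1)).sub_const (K * (th - t1)^2)) (by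
      refine HasDerivAt.sub ?_ (hψ1 xh)
      refine (HasDerivAt.fun_sum fun i _ => ?_).const_mul _
      exact (H xh hxhI _ (hti i)).2.1) hXm
  have hpde : (h / n) * ∑ i ∈ Finset.range n, ut xh (th + i * (h / n)) =
      (h / n) * ∑ i ∈ Finset.range n, uxx xh (th + i * (h / n)) - q xh * rsum u h n xh th := by
    have : ∀ i ∈ Finset.range n, ut xh (th + i * (h / n)) = uxx xh (th + i * (h / n)) - q xh * u xh (th + i * (h / n)) :=
      fun i _ => (H xh hxhI _ (hti i)).2.2.2
    rw [Finset.sum_congr rfl this, Finset.sum_sub_distrib, ← Finset.mul_sum, rsum]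
    ring
  have hFF := (abs_lt.1 (by
    have := hFd (xh, th) (by
      rw [Prod.dist_eq, max_lt_iff, Real.dist_eq, Real.dist_eq, abs_lt, abs_lt]
      constructor <;> constructor <;> simp <;> linarith)
    rwa [Real.dist_eq, sub_zero] at this)).2
  have hr : q xh * (vint u h xh th - rsum u h n xh th) ≤ η / 2 := by
    have h1 := hnε xh hxhI' th ⟨hth0.le, (hbt th hth).2⟩
    have e1 : (∫ s in (0:ℝ)..h, u xh (th + s)) = vint u h xh th := rfl
    rw [e1, abs_sub_comm] at h1
    calc _ ≤ |q xh * (vint u h xh th - rsum u h n xh th)| := le_abs_self _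
      _ = |q xh| * |vint u h xh th - rsum u h n xh th| := abs_mul _ _
      _ ≤ Q * ε := by gcongr; exact hQ xh hxhI'
      _ ≤ _ := hεQ
  have h2 := hψ2 xh hxhI'
  simp only [F] at hFF
  linarith

theorem visc_le {q : ℝ → ℝ} {u ux uxx ut : ℝ → ℝ → ℝ} (H : HeatInt q u ux uxx ut)
    (hq : Continuous q) (hu : Continuous (fun p : ℝ × ℝ => u p.1 p.2)) {h t1 L : ℝ} (hh : 0 < h) (ht1 : 0 < t1)
    (hL : ∀ t, 0 < t → t ≤ t1 + h + 1 → ∀ x ∈ Icc (0:ℝ) 1, ∀ y ∈ Icc (0:ℝ) 1, |u x t - u y t| ≤ L * |x - y|)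
    {r : ℝ → ℝ} (hr : ∀ x, r x = vint u h x t1 - ∫ y in (0:ℝ)..x, ∫ z in (0:ℝ)..y, (u z (t1 + h) - u z t1 + q z * vint u h z t1))
    {x : ℝ} (hx : x ∈ Icc (0:ℝ) 1) : r x ≤ (1 - x) * r 0 + x * r 1 := by
  by_contra hc
  push Not at hc
  set g : ℝ → ℝ := fun z => u z (t1 + h) - u z t1 + q z * vint u h z t1 with hg
  have cv : Continuous fun z => vint u h z t1 := (vint_cont hu h).comp (by fun_prop : Continuous fun p : ℝ => (p, t1))
  have cg : Continuous g := by
    have c1 : Continuous fun p : ℝ => u p (t1 + h) := hu.comp (by fun_prop : Continuous fun p : ℝ => (p, t1 + h))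
    have c3 : Continuous fun p : ℝ => u p t1 := hu.comp (by fun_prop : Continuous fun p : ℝ => (p, t1))
    exact (c1.sub c3).add (hq.mul cv)
  have dG1 : ∀ x, HasDerivAt (fun y => ∫ z in (0:ℝ)..y, g z) (g x) x := fun x =>
    intervalIntegral.integral_hasDerivAt_right (cg.intervalIntegrable _ _) (cg.stronglyMeasurableAtFilter _ _) cg.continuousAt
  have cG1 : Continuous fun y => ∫ z in (0:ℝ)..y, g z := continuous_iff_continuousAt.2 fun x => (dG1 x).continuousAt
  have dG : ∀ x, HasDerivAt (fun x => ∫ y in (0:ℝ)..x, ∫ z in (0:ℝ)..y, g z) (∫ z in (0:ℝ)..x, g z) x := fun x =>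
    intervalIntegral.integral_hasDerivAt_right (cG1.intervalIntegrable _ _) (cG1.stronglyMeasurableAtFilter _ _) cG1.continuousAt
  have cG : Continuous fun x => ∫ y in (0:ℝ)..x, ∫ z in (0:ℝ)..y, g z := continuous_iff_continuousAt.2 fun x => (dG x).continuousAt
  have cr : Continuous r := by
    have : r = fun x => vint u h x t1 - ∫ y in (0:ℝ)..x, ∫ z in (0:ℝ)..y, g z := funext hr
    rw [this]; exact cv.sub cG
  set η : ℝ := r x - ((1 - x) * r 0 + x * r 1) with hη
  have hη0 : 0 < η := by linarith
  let k : ℝ → ℝ := fun y => r y - ((1 - y) * r 0 + y * r 1) - η * (y * (1 - y))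
  have ck : Continuous k := by
    exact (cr.sub (by fun_prop)).sub (by fun_prop)
  obtain ⟨x0, hx0, hmax⟩ := isCompact_Icc.exists_isMaxOn (s := Icc (0:ℝ) 1) ⟨x, hx⟩ ck.continuousOn
  have hkx : 0 < k x := by
    change 0 < r x - ((1 - x) * r 0 + x * r 1) - η * (x * (1 - x))
    rw [← hη]
    nlinarith [mul_nonneg hη0.le (sq_nonneg (x - 1/2))]
  have hk0 : 0 < k x0 := hkx.trans_le (hmax hx)
  have hne0 : x0 ≠ 0 := by rintro rfl; simp [k] at hk0
  have hne1 : x0 ≠ 1 := by rintro rfl; simp [k] at hk0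
  have hx0' : x0 ∈ Ioo (0:ℝ) 1 := ⟨lt_of_le_of_ne hx0.1 (Ne.symm hne0), lt_of_le_of_ne hx0.2 hne1⟩
  refine visc_contra H hq hu hh ht1 hL hη0 hx0'
    (ψ := fun x => (∫ y in (0:ℝ)..x, ∫ z in (0:ℝ)..y, g z) + ((1 - x) * r 0 + x * r 1 + η * (x * (1 - x)) + k x0 + η / 2 * (x - x0)^2))
    (ψ1 := fun x => (∫ z in (0:ℝ)..x, g z) + (r 1 - r 0 + η * (1 - 2 * x) + η * (x - x0)))
    (ψ2 := fun x => g x + (- η)) (fun y => (dG y).add ?_) (fun y => (dG1 y).add ?_) (fun y hy => ?_) (fun y hy => ?_) ?_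
  · have i := hasDerivAt_id y
    have := ((((i.const_sub 1).mul_const (r 0)).add (i.mul_const (r 1))).add ((i.mul (i.const_sub 1)).const_mul η)).add_const (k x0)
    have := this.add (((i.sub_const x0).pow 2).const_mul (η/2))
    refine (this.congr_deriv ?_)
    simp; ring
  · have i := hasDerivAt_id y
    have := (((i.const_mul 2).const_sub 1).const_mul η).const_add (r 1 - r 0)
    have := this.add ((i.sub_const x0).const_mul η)
    refine (this.congr_deriv ?_)
    simp; ring
  · simp only [hg]; linarith
  · have h1 : k y ≤ k x0 := hmax hy
    have h2 : k y = r y - ((1 - y) * r 0 + y * r 1) - η * (y * (1 - y)) := rfl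
    have h3 := hr y
    linarith
  · have h2 : k x0 = r x0 - ((1 - x0) * r 0 + x0 * r 1) - η * (x0 * (1 - x0)) := rfl
    have h3 := hr x0
    simp only [sub_self]
    linarith

theorem visc_eq {q : ℝ → ℝ} {u ux uxx ut : ℝ → ℝ → ℝ} (H : HeatInt q u ux uxx ut)
    (hq : Continuous q) (hu : Continuous (fun p : ℝ × ℝ => u p.1 p.2)) {h t1 L : ℝ} (hh : 0 < h) (ht1 : 0 < t1)
    (hL : ∀ t, 0 < t → t ≤ t1 + h + 1 → ∀ x ∈ Icc (0:ℝ) 1, ∀ y ∈ Icc (0:ℝ) 1, |u x t - u y t| ≤ L * |x - y|)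
    {r : ℝ → ℝ} (hr : ∀ x, r x = vint u h x t1 - ∫ y in (0:ℝ)..x, ∫ z in (0:ℝ)..y, (u z (t1 + h) - u z t1 + q z * vint u h z t1))
    {x : ℝ} (hx : x ∈ Icc (0:ℝ) 1) : r x = (1 - x) * r 0 + x * r 1 := by
  refine le_antisymm (visc_le H hq hu hh ht1 hL hr hx) ?_
  have hvn : ∀ z, vint (fun x t => - u x t) h z t1 = - vint u h z t1 := fun z => by
    simp [vint]
  have := visc_le H.neg hq hu.neg hh ht1 (L := L) (fun t h1 h2 x hx y hy => by
    rw [show -u x t - -u y t = -(u x t - u y t) by ring, abs_neg]; exact hL t h1 h2 x hx y hy)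
    (r := fun x => - r x) (fun x => by
      rw [hr x, hvn]
      have : ∀ z, -u z (t1 + h) - -u z t1 + q z * vint (fun x t => - u x t) h z t1 = -(u z (t1 + h) - u z t1 + q z * vint u h z t1) := fun z => by
        rw [hvn]; ring
      simp only [this, intervalIntegral.integral_neg]
      ring) hx
  linarith

/-- Heat solution extended to the plane, with the Lipschitz and growth bound. -/
structure HeatPack (q : ℝ → ℝ) (u ux uxx ut : ℝ → ℝ → ℝ) (f : ℝ → ℝ) (C c : ℝ) : Prop where
  hq : Continuous q
  hu : Continuous (fun p : ℝ × ℝ => u p.1 p.2)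
  H : HeatInt q u ux uxx ut
  hC : 0 < C
  hc : 0 < c
  lip : ∀ t, 0 < t → ∀ x ∈ Icc (0:ℝ) 1, ∀ y ∈ Icc (0:ℝ) 1, |u x t - u y t| ≤ C * Real.exp (c * t) * |x - y|
  u0 : ∀ x, u x 0 = 0
  ul : ∀ t, u 0 t = 0
  flux : ∀ t, 0 < t → Tendsto (fun x => u x t / x) (𝓝[>] 0) (𝓝 (f t))

/-- The second primitive term. -/
noncomputable def gg (q : ℝ → ℝ) (u : ℝ → ℝ → ℝ) (h t1 z : ℝ) : ℝ := u z (t1 + h) - u z t1 + q z * vint u h z t1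

noncomputable def rr (q : ℝ → ℝ) (u : ℝ → ℝ → ℝ) (h t1 x : ℝ) : ℝ :=
  vint u h x t1 - ∫ y in (0:ℝ)..x, ∫ z in (0:ℝ)..y, gg q u h t1 z

theorem vint_cont3 {u : ℝ → ℝ → ℝ} (hu : Continuous (fun p : ℝ × ℝ => u p.1 p.2)) :
    Continuous (fun p : ℝ × ℝ × ℝ => vint u p.1 p.2.1 p.2.2) := by
  unfold vint
  have h1 : Continuous (Function.uncurry fun (p : ℝ × ℝ × ℝ) s => u p.2.1 (p.2.2 + s)) :=
    hu.comp (by fun_prop : Continuous fun z : (ℝ × ℝ × ℝ) × ℝ => (z.1.2.1, z.1.2.2 + z.2))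
  have := intervalIntegral.continuous_parametric_primitive_of_continuous (μ := volume) (a₀ := 0) h1
  exact this.comp (by fun_prop : Continuous fun p : ℝ × ℝ × ℝ => (p, p.1))

theorem gg_cont {q : ℝ → ℝ} {u : ℝ → ℝ → ℝ} (hq : Continuous q) (hu : Continuous (fun p : ℝ × ℝ => u p.1 p.2)) :
    Continuous (fun p : (ℝ × ℝ) × ℝ => gg q u p.1.1 p.1.2 p.2) := by
  unfold gg
  have c1 : Continuous fun p : (ℝ × ℝ) × ℝ => u p.2 (p.1.2 + p.1.1) := hu.comp (by fun_prop : Continuous fun p : (ℝ × ℝ) × ℝ => (p.2, p.1.2 + p.1.1))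
  have c2 : Continuous fun p : (ℝ × ℝ) × ℝ => u p.2 (p.1.2) := hu.comp (by fun_prop : Continuous fun p : (ℝ × ℝ) × ℝ => (p.2, p.1.2))
  have c3 : Continuous fun p : (ℝ × ℝ) × ℝ => vint u p.1.1 p.2 p.1.2 := (vint_cont3 hu).comp (by fun_prop : Continuous fun p : (ℝ × ℝ) × ℝ => (p.1.1, p.2, p.1.2))
  exact (c1.sub c2).add ((hq.comp continuous_snd).mul c3)

theorem gg_prim_cont {q : ℝ → ℝ} {u : ℝ → ℝ → ℝ} (hq : Continuous q) (hu : Continuous (fun p : ℝ × ℝ => u p.1 p.2)) :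
    Continuous (fun p : (ℝ × ℝ) × ℝ => ∫ z in (0:ℝ)..p.2, gg q u p.1.1 p.1.2 z) :=
  intervalIntegral.continuous_parametric_primitive_of_continuous (μ := volume) (a₀ := 0)
    (f := fun (p : ℝ × ℝ) z => gg q u p.1 p.2 z) (gg_cont hq hu)

theorem rr_cont {q : ℝ → ℝ} {u : ℝ → ℝ → ℝ} (hq : Continuous q) (hu : Continuous (fun p : ℝ × ℝ => u p.1 p.2)) :
    Continuous (fun p : (ℝ × ℝ) × ℝ => rr q u p.1.1 p.1.2 p.2) := by
  unfold rr
  have c3 : Continuous fun p : (ℝ × ℝ) × ℝ => vint u p.1.1 p.2 p.1.2 := (vint_cont3 hu).comp (by fun_prop : Continuous fun p : (ℝ × ℝ) × ℝ => (p.1.1, p.2, p.1.2))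
  exact c3.sub (intervalIntegral.continuous_parametric_primitive_of_continuous (μ := volume) (a₀ := 0)
    (f := fun (p : ℝ × ℝ) y => ∫ z in (0:ℝ)..y, gg q u p.1 p.2 z) (gg_prim_cont hq hu))

section
variable {q : ℝ → ℝ} {u ux uxx ut : ℝ → ℝ → ℝ} {f : ℝ → ℝ} {C c : ℝ}

theorem HeatPack.rr_lin (P : HeatPack q u ux uxx ut f C c) {h : ℝ} (hh : 0 < h) {x : ℝ} (hx : x ∈ Icc (0:ℝ) 1) :
    rr q u h 0 x = x * rr q u h 0 1 := by
  have key : ∀ t1, 0 < t1 → rr q u h t1 x = (1 - x) * rr q u h t1 0 + x * rr q u h t1 1 := by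
    intro t1 ht1
    refine visc_eq P.H P.hq P.hu hh ht1 (L := C * Real.exp (c * (t1 + h + 1))) ?_ (fun x => rfl) hx
    intro t h1 h2 x hx y hy
    refine (P.lip t h1 x hx y hy).trans ?_
    have := P.hC; have := P.hc
    gcongr
  have hc : ∀ x, Continuous fun t1 => rr q u h t1 x := fun x =>
    (rr_cont P.hq P.hu).comp (by fun_prop : Continuous fun t1 : ℝ => ((h, t1), x))
  have l1 : Tendsto (fun t1 => rr q u h t1 x) (𝓝[>] 0) (𝓝 (rr q u h 0 x)) := ((hc x).tendsto 0).mono_left nhdsWithin_le_nhds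
  have l2 : Tendsto (fun t1 => (1 - x) * rr q u h t1 0 + x * rr q u h t1 1) (𝓝[>] 0) (𝓝 ((1 - x) * rr q u h 0 0 + x * rr q u h 0 1)) :=
    ((((hc 0).const_mul (1-x)).add ((hc 1).const_mul x)).tendsto 0).mono_left nhdsWithin_le_nhds
  have := tendsto_nhds_unique (l1.congr' (by filter_upwards [self_mem_nhdsWithin] with t ht using key t ht)) l2
  rw [this]
  have : rr q u h 0 0 = 0 := by simp [rr, vint, P.ul]
  rw [this]; ring

theorem HeatPack.bound (P : HeatPack q u ux uxx ut f C c) {x t : ℝ} (hx : x ∈ Icc (0:ℝ) 1) (ht : 0 ≤ t) :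
    |u x t| ≤ C * Real.exp (c * t) := by
  have := P.hC
  rcases ht.eq_or_lt with rfl | ht
  · rw [P.u0, abs_zero]; positivity
  · have := P.lip t ht x hx 0 ⟨le_rfl, zero_le_one⟩
    rw [P.ul, sub_zero, sub_zero, abs_of_nonneg hx.1] at this
    refine this.trans ?_
    have : 0 ≤ C * Real.exp (c * t) := by positivity
    nlinarith [hx.2]

theorem HeatPack.slope_b (P : HeatPack q u ux uxx ut f C c) {h : ℝ} (hh : 0 < h) :
    rr q u h 0 1 = ∫ τ in (0:ℝ)..h, f τ := by
  have h1 : Tendsto (fun x => vint u h x 0 / x) (𝓝[>] 0) (𝓝 (∫ τ in (0:ℝ)..h, f τ)) := by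
    have e : (fun x => vint u h x 0 / x) = fun x => ∫ s in (0:ℝ)..h, u x s / x := by
      ext x; simp [vint]
    rw [e]
    refine intervalIntegral.tendsto_integral_filter_of_dominated_convergence (fun _ => C * Real.exp (c * h)) ?_ ?_ ?_ ?_
    · refine Eventually.of_forall fun x => ?_
      have : Continuous fun s => u x s / x := (P.hu.comp (by fun_prop : Continuous fun s : ℝ => (x, s))).div_const x
      exact this.aestronglyMeasurable
    · filter_upwards [Ioo_mem_nhdsGT (zero_lt_one' ℝ)] with x hx
      refine Eventually.of_forall fun s hs => ?_
      rw [uIoc_of_le hh.le] at hs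
      have := P.lip s hs.1 x ⟨hx.1.le, hx.2.le⟩ 0 ⟨le_rfl, zero_le_one⟩
      rw [P.ul, sub_zero, sub_zero] at this
      rw [Real.norm_eq_abs, abs_div, div_le_iff₀ (abs_pos.2 hx.1.ne')]
      refine this.trans ?_
      have := P.hC; have := P.hc; have := hs.2
      gcongr
    · simp
    · refine Eventually.of_forall fun s hs => ?_
      rw [uIoc_of_le hh.le] at hs
      exact P.flux s hs.1
  have d1 : HasDerivAt (fun y => ∫ z in (0:ℝ)..y, gg q u h 0 z) (gg q u h 0 0) 0 := by
    have cg : Continuous fun z => gg q u h 0 z := (gg_cont P.hq P.hu).comp (by fun_prop : Continuous fun z : ℝ => ((h, (0:ℝ)), z))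
    exact intervalIntegral.integral_hasDerivAt_right (cg.intervalIntegrable _ _) (cg.stronglyMeasurableAtFilter _ _) cg.continuousAt
  have d2 : HasDerivAt (fun x => ∫ y in (0:ℝ)..x, ∫ z in (0:ℝ)..y, gg q u h 0 z) 0 0 := by
    have cg : Continuous fun y => ∫ z in (0:ℝ)..y, gg q u h 0 z := (gg_prim_cont P.hq P.hu).comp (by fun_prop : Continuous fun z : ℝ => ((h, (0:ℝ)), z))
    have := intervalIntegral.integral_hasDerivAt_right (a := 0) (b := 0) (cg.intervalIntegrable _ _) (cg.stronglyMeasurableAtFilter _ _) cg.continuousAt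
    simpa using this
  have h2 : Tendsto (fun x => (∫ y in (0:ℝ)..x, ∫ z in (0:ℝ)..y, gg q u h 0 z) / x) (𝓝[>] 0) (𝓝 0) := by
    have := (hasDerivAt_iff_tendsto_slope.1 d2).mono_left (nhdsWithin_mono 0 (fun x hx => ne_of_gt hx : Ioi (0:ℝ) ⊆ {0}ᶜ))
    refine this.congr fun x => ?_
    simp [slope_def_field]
  have h3 := h1.sub h2
  rw [sub_zero] at h3
  refine tendsto_nhds_unique (tendsto_const_nhds.congr' ?_) h3
  filter_upwards [Ioo_mem_nhdsGT (zero_lt_one' ℝ)] with x hx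
  have := P.rr_lin hh ⟨hx.1.le, hx.2.le⟩
  rw [← sub_div, eq_div_iff hx.1.ne', mul_comm, ← this, rr]

/-- Green identity. -/
theorem HeatPack.green (P : HeatPack q u ux uxx ut f C c) {h : ℝ} (hh : 0 < h) {s : ℝ} {φ φ1 : ℝ → ℝ}
    (hφ : ∀ x, HasDerivAt φ (φ1 x) x) (hφ1 : ∀ x, HasDerivAt φ1 ((q x + s) * φ x) x) (h1 : φ 1 = 0) (h1' : φ1 1 = 1) :
    ∫ x in (0:ℝ)..1, (u x h - s * vint u h x 0) * φ x = - vint u h 1 0 - rr q u h 0 1 * φ 0 := by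
  set b := rr q u h 0 1 with hb
  have cg : Continuous fun z => gg q u h 0 z := (gg_cont P.hq P.hu).comp (by fun_prop : Continuous fun z : ℝ => ((h, (0:ℝ)), z))
  have cg1 : Continuous fun y => ∫ z in (0:ℝ)..y, gg q u h 0 z := (gg_prim_cont P.hq P.hu).comp (by fun_prop : Continuous fun z : ℝ => ((h, (0:ℝ)), z))
  have d1 : ∀ x, HasDerivAt (fun y => b + ∫ z in (0:ℝ)..y, gg q u h 0 z) (gg q u h 0 x) x := fun x =>
    (intervalIntegral.integral_hasDerivAt_right (cg.intervalIntegrable _ _) (cg.stronglyMeasurableAtFilter _ _) cg.continuousAt).const_add b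
  let Bt : ℝ → ℝ := fun x => x * b + ∫ y in (0:ℝ)..x, ∫ z in (0:ℝ)..y, gg q u h 0 z
  have d2 : ∀ x, HasDerivAt Bt (b + ∫ z in (0:ℝ)..x, gg q u h 0 z) x := fun x => by
    have := (hasDerivAt_mul_const (x := x) b).add
      (intervalIntegral.integral_hasDerivAt_right (a := 0) (b := x) (cg1.intervalIntegrable _ _) (cg1.stronglyMeasurableAtFilter _ _) cg1.continuousAt)
    exact this
  have hBt : ∀ x ∈ Icc (0:ℝ) 1, Bt x = vint u h x 0 := by
    intro x hx
    have := P.rr_lin hh hx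
    rw [rr] at this
    simp only [Bt]; linarith
  have cφ : Continuous φ := continuous_iff_continuousAt.2 fun x => (hφ x).continuousAt
  have cB : Continuous Bt := continuous_iff_continuousAt.2 fun x => (d2 x).continuousAt
  have hF := intervalIntegral.integral_eq_sub_of_hasDerivAt (a := 0) (b := 1)
    (f := fun x => (b + ∫ z in (0:ℝ)..x, gg q u h 0 z) * φ x - Bt x * φ1 x)
    (f' := fun x => gg q u h 0 x * φ x - Bt x * ((q x + s) * φ x))
    (fun x _ => (((d1 x).mul (hφ x)).sub ((d2 x).mul (hφ1 x))).congr_deriv (by ring))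
    ((((cg.mul cφ).sub (cB.mul ((P.hq.add continuous_const).mul cφ)))).intervalIntegrable _ _)
  have e : ∫ x in (0:ℝ)..1, (u x h - s * vint u h x 0) * φ x = ∫ x in (0:ℝ)..1, (gg q u h 0 x * φ x - Bt x * ((q x + s) * φ x)) := by
    refine intervalIntegral.integral_congr fun x hx => ?_
    rw [uIcc_of_le zero_le_one] at hx
    simp only [hBt x hx, gg, P.u0, zero_add]
    ring
  have b1 := hBt 1 ⟨zero_le_one, le_rfl⟩
  have b0 := hBt 0 ⟨le_rfl, zero_le_one⟩
  have b00 : vint u h 0 0 = 0 := by simp [vint, P.ul]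
  rw [e, hF, b1, b0, b00, h1, h1']
  simp

end

theorem deriv_int {𝕜 : Type} [RCLike 𝕜] {F F' : 𝕜 → ℝ → 𝕜} (hF : ∀ z, Continuous (F z))
    (hF' : Continuous (fun p : 𝕜 × ℝ => F' p.1 p.2)) (hd : ∀ z x, HasDerivAt (fun z => F z x) (F' z x) z)
    (a b : ℝ) (z0 : 𝕜) : HasDerivAt (fun z => ∫ x in a..b, F z x) (∫ x in a..b, F' z0 x) z0 := by
  obtain ⟨K, hK⟩ := ((isCompact_closedBall z0 1).prod (isCompact_uIcc (a := a) (b := b))).exists_bound_of_continuousOn hF'.continuousOn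
  have hc : Continuous (F' z0) := hF'.comp (by fun_prop : Continuous fun x : ℝ => (z0, x))
  refine (intervalIntegral.hasDerivAt_integral_of_dominated_loc_of_deriv_le (bound := fun _ => K)
    (Metric.closedBall_mem_nhds z0 one_pos) (Eventually.of_forall fun z => (hF z).aestronglyMeasurable)
    ((hF z0).intervalIntegrable _ _) hc.aestronglyMeasurable (Eventually.of_forall fun t ht z hz => ?_) (by simp)
    (Eventually.of_forall fun t _ z _ => hd z t)).2
  exact hK (z, t) ⟨hz, uIoc_subset_uIcc ht⟩

section
variable {q : ℝ → ℝ} {u ux uxx ut : ℝ → ℝ → ℝ} {f : ℝ → ℝ} {C c : ℝ}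

theorem vint_h_deriv (hu : Continuous (fun p : ℝ × ℝ => u p.1 p.2)) (x t : ℝ) :
    HasDerivAt (fun h => vint u h x 0) (u x t) t := by
  have cx : Continuous (u x) := hu.comp (by fun_prop : Continuous fun s : ℝ => (x, s))
  simp only [vint, zero_add]
  exact intervalIntegral.integral_hasDerivAt_right (cx.intervalIntegrable _ _) (cx.stronglyMeasurableAtFilter _ _) cx.continuousAt

theorem HeatPack.vint_bound (P : HeatPack q u ux uxx ut f C c) {x t : ℝ} (hx : x ∈ Icc (0:ℝ) 1) (ht : 0 ≤ t) :
    |vint u t x 0| ≤ C * Real.exp (c * t) * t := by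
  have := intervalIntegral.norm_integral_le_of_norm_le_const (a := 0) (b := t) (f := fun s => u x (0 + s))
    (C := C * Real.exp (c * t)) (fun s hs => by
      rw [uIoc_of_le ht] at hs
      rw [zero_add, Real.norm_eq_abs]
      refine (P.bound hx hs.1.le).trans ?_
      have := P.hC; have := P.hc; have := hs.2
      gcongr)
  simpa [vint, abs_of_nonneg ht] using this

theorem HeatPack.laplace (P : HeatPack q u ux uxx ut f C c) {s : ℝ} (hs : c < s) {φ φ1 : ℝ → ℝ}
    (hφ : ∀ x, HasDerivAt φ (φ1 x) x) (hφ1 : ∀ x, HasDerivAt φ1 ((q x + s) * φ x) x) (h1 : φ 1 = 0) (h1' : φ1 1 = 1) :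
    Tendsto (fun T => φ 0 * (∫ t in (0:ℝ)..T, Real.exp (-s * t) * rr q u t 0 1) +
      1 / s * ∫ t in (0:ℝ)..T, Real.exp (-s * t) * u 1 t) atTop (𝓝 0) := by
  have hs0 : 0 < s := P.hc.trans hs
  have cφ : Continuous φ := continuous_iff_continuousAt.2 fun x => (hφ x).continuousAt
  have cu1 : Continuous (u 1) := P.hu.comp (by fun_prop : Continuous fun s : ℝ => ((1:ℝ), s))
  have cb : Continuous fun t => rr q u t 0 1 := (rr_cont P.hq P.hu).comp (by fun_prop : Continuous fun t : ℝ => ((t, (0:ℝ)), (1:ℝ)))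
  let J : ℝ → ℝ := fun t => ∫ x in (0:ℝ)..1, vint u t x 0 * φ x
  have cvx : ∀ t, Continuous fun x => vint u t x 0 := fun t => (vint_cont P.hu t).comp (by fun_prop : Continuous fun x : ℝ => (x, (0:ℝ)))
  have cux : ∀ t, Continuous fun x => u x t := fun t => P.hu.comp (by fun_prop : Continuous fun x : ℝ => (x, t))
  have dJ : ∀ t, HasDerivAt J (∫ x in (0:ℝ)..1, u x t * φ x) t := fun t => by
    refine deriv_int (𝕜 := ℝ) (F := fun t x => vint u t x 0 * φ x) (F' := fun t x => u x t * φ x) (fun t => (cvx t).mul cφ) ?_ ?_ 0 1 t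
    · exact (P.hu.comp (by fun_prop : Continuous fun p : ℝ × ℝ => (p.2, p.1))).mul (cφ.comp continuous_snd)
    · exact fun t x => (vint_h_deriv P.hu x t).mul_const _
  let Lf : ℝ → ℝ := fun t => Real.exp (-s * t) * (J t - vint u t 1 0 / s)
  have hv0 : ∀ x, vint u 0 x 0 = 0 := fun x => by simp [vint]
  have dL : ∀ t, 0 < t → HasDerivAt Lf (- (φ 0 * (Real.exp (-s * t) * rr q u t 0 1) + 1 / s * (Real.exp (-s * t) * u 1 t))) t := fun t ht => by
    have e1 : HasDerivAt (fun t => Real.exp (-s * t)) (Real.exp (-s * t) * -s) t := by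
      have := ((hasDerivAt_id t).const_mul (-s)).exp
      simpa using this
    refine (e1.mul ((dJ t).sub ((vint_h_deriv P.hu 1 t).div_const s))).congr_deriv ?_
    have G := P.green ht hφ hφ1 h1 h1'
    have e2 : ∫ x in (0:ℝ)..1, (u x t - s * vint u t x 0) * φ x = (∫ x in (0:ℝ)..1, u x t * φ x) - s * J t := by
      rw [← intervalIntegral.integral_const_mul, ← intervalIntegral.integral_sub]
      · refine intervalIntegral.integral_congr fun x _ => ?_
        ring
      · exact ((cux t).mul cφ).intervalIntegrable _ _
      · exact (((cvx t).mul cφ).const_mul s).intervalIntegrable _ _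
    have e3 : ∫ x in (0:ℝ)..1, u x t * φ x = s * J t - vint u t 1 0 - rr q u t 0 1 * φ 0 := by linarith
    simp only [Pi.sub_apply]
    rw [e3]
    field_simp
    ring
  have cL : Continuous Lf := by
    have c1 : Continuous J := continuous_iff_continuousAt.2 fun t => (dJ t).continuousAt
    have c2 : Continuous fun t => vint u t 1 0 := continuous_iff_continuousAt.2 fun t => (vint_h_deriv P.hu 1 t).continuousAt
    exact (by fun_prop : Continuous fun t => Real.exp (-s * t)).mul (c1.sub (c2.div_const s))
  have c3 : Continuous fun t => Real.exp (-s * t) * rr q u t 0 1 := (by fun_prop : Continuous fun t => Real.exp (-s * t)).mul cb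
  have c4 : Continuous fun t => Real.exp (-s * t) * u 1 t := (by fun_prop : Continuous fun t => Real.exp (-s * t)).mul cu1
  have hintT : ∀ T, 0 < T → φ 0 * (∫ t in (0:ℝ)..T, Real.exp (-s * t) * rr q u t 0 1) +
      1 / s * (∫ t in (0:ℝ)..T, Real.exp (-s * t) * u 1 t) = - Lf T := fun T hT => by
    have := intervalIntegral.integral_eq_sub_of_hasDerivAt_of_le hT.le cL.continuousOn (fun t ht => dL t ht.1)
      (((c3.const_mul (φ 0)).add (c4.const_mul (1/s))).neg.intervalIntegrable _ _)
    rw [intervalIntegral.integral_neg, intervalIntegral.integral_add ((c3.const_mul (φ 0)).intervalIntegrable _ _) ((c4.const_mul (1/s)).intervalIntegrable _ _),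
      intervalIntegral.integral_const_mul, intervalIntegral.integral_const_mul] at this
    have L0 : Lf 0 = 0 := by simp [Lf, J, hv0]
    rw [L0] at this
    linarith
  obtain ⟨Φ, hΦ⟩ := isCompact_Icc.exists_bound_of_continuousOn (s := Icc (0:ℝ) 1) cφ.continuousOn
  have hΦ0 : 0 ≤ Φ := (norm_nonneg _).trans (hΦ 0 ⟨le_rfl, zero_le_one⟩)
  have hLb : ∀ T, 0 < T → ‖Lf T‖ ≤ (C * (Φ + 1 / s) / (s - c)) * (((s - c) * T)^1 * Real.exp (-((s - c) * T))) := fun T hT => by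
    have hJ : |J T| ≤ C * Real.exp (c * T) * T * Φ := by
      have := intervalIntegral.norm_integral_le_of_norm_le_const (a := 0) (b := 1) (f := fun x => vint u T x 0 * φ x)
        (C := C * Real.exp (c * T) * T * Φ) (fun x hx => by
          rw [uIoc_of_le zero_le_one] at hx
          have hx' : x ∈ Icc (0:ℝ) 1 := ⟨hx.1.le, hx.2⟩
          rw [norm_mul]
          have := P.hC
          exact mul_le_mul (P.vint_bound hx' hT.le) (hΦ x hx') (norm_nonneg _) (by positivity))
      simpa using this
    have hα := P.vint_bound (x := 1) ⟨zero_le_one, le_rfl⟩ hT.le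
    have hsc : 0 < s - c := by linarith
    rw [Real.norm_eq_abs, abs_mul, Real.abs_exp]
    have h5 : |J T - vint u T 1 0 / s| ≤ C * Real.exp (c * T) * T * Φ + C * Real.exp (c * T) * T / s := by
      refine (abs_sub _ _).trans (add_le_add hJ ?_)
      rw [abs_div, abs_of_pos hs0]; gcongr
    refine (mul_le_mul_of_nonneg_left h5 (Real.exp_pos _).le).trans (le_of_eq ?_)
    have h6 : Real.exp (-((s - c) * T)) = Real.exp (-s * T) * Real.exp (c * T) := by
      rw [← Real.exp_add]; congr 1; ring
    rw [h6]; field_simp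
  have hL0 : Tendsto Lf atTop (𝓝 0) := by
    refine squeeze_zero_norm' ((eventually_gt_atTop 0).mono hLb) ?_
    have := (Real.tendsto_pow_mul_exp_neg_atTop_nhds_zero 1).comp (tendsto_id.const_mul_atTop (by linarith : 0 < s - c))
    simpa using this.const_mul (C * (Φ + 1 / s) / (s - c))
  have := hL0.neg
  rw [neg_zero] at this
  refine this.congr' ?_
  filter_upwards [eventually_gt_atTop 0] with T hT using (hintT T hT).symm
end

/-- Two packs with the same boundary data and flux. -/
theorem two_packs {q1 q2 : ℝ → ℝ} {u1 ux1 uxx1 ut1 u2 ux2 uxx2 ut2 : ℝ → ℝ → ℝ} {f : ℝ → ℝ} {C1 c1 C2 c2 M T0 : ℝ}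
    (P1 : HeatPack q1 u1 ux1 uxx1 ut1 f C1 c1) (P2 : HeatPack q2 u2 ux2 uxx2 ut2 f C2 c2)
    (hM1 : ∀ x, |q1 x| ≤ M) (hM2 : ∀ x, |q2 x| ≤ M) (hT0 : 0 < T0)
    (hb : ∀ t, 0 < t → u1 1 t = u2 1 t) (hz : ∀ t, T0 < t → u1 1 t = 0) {s : ℝ} (hs1 : c1 < s) (hs2 : c2 < s) :
    (solY (pot q1 s) 0 0 1 1 - solY (pot q2 s) 0 0 1 1) * ((∫ t in (0:ℝ)..T0, Real.exp (-s * t) * u1 1 t : ℝ) : ℂ) = 0 := by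
  have key : ∀ q : ℝ → ℝ, Continuous q → (∀ x, |q x| ≤ M) → ∃ φ φ1 : ℝ → ℝ, (∀ x, HasDerivAt φ (φ1 x) x) ∧
      (∀ x, HasDerivAt φ1 ((q x + s) * φ x) x) ∧ φ 1 = 0 ∧ φ1 1 = 1 ∧ solY (pot q s) 0 0 1 1 = - (φ 0 : ℂ) := by
    intro q hq hM
    have hp : Continuous fun t => q t + s := hq.add continuous_const
    have hb := real_bound hM s
    refine ⟨solY (fun t => q t + s) 1 0 1, solZ (fun t => q t + s) 1 0 1, solY_deriv hp hb, solZ_deriv hp hb, solY_init .., solZ_init .., ?_⟩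
    have dy := fun x => solY_deriv (x0 := 0) (a := 0) (b := 1) (pot_cont hq s) (pot_bound hM s) x
    have dz := fun x => solZ_deriv (x0 := 0) (a := 0) (b := 1) (pot_cont hq s) (pot_bound hM s) x
    have dy' := fun x => solY_deriv (x0 := 1) (a := 0) (b := 1) (pot_cont hq s) (pot_bound hM s) x
    have dz' := fun x => solZ_deriv (x0 := 1) (a := 0) (b := 1) (pot_cont hq s) (pot_bound hM s) x
    have := wronskian_const zero_le_one (fun x _ => dy x) (fun x _ => dz x) (fun x _ => dy' x) (fun x _ => dz' x)
    simp only [solY_init, solZ_init] at this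
    have e := solY_ofReal (fun t => q t + s) 1 0 1 0
    rw [← pot_ofReal] at e
    simp only [Complex.ofReal_zero, Complex.ofReal_one] at e
    rw [e] at this
    linear_combination -this
  obtain ⟨φ, φ', a1, a2, a3, a4, a5⟩ := key q1 P1.hq hM1
  obtain ⟨θ, θ', b1, b2, b3, b4, b5⟩ := key q2 P2.hq hM2
  have L1 := P1.laplace hs1 a1 a2 a3 a4
  have L2 := P2.laplace hs2 b1 b2 b3 b4
  have hs0 : 0 < s := P1.hc.trans hs1
  set A := ∫ t in (0:ℝ)..T0, Real.exp (-s * t) * u1 1 t with hA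
  have cu1 : Continuous (u1 1) := P1.hu.comp (by fun_prop : Continuous fun s : ℝ => ((1:ℝ), s))
  have c4 : Continuous fun t => Real.exp (-s * t) * u1 1 t := (by fun_prop : Continuous fun t => Real.exp (-s * t)).mul cu1
  have eA : ∀ T, T0 < T → ∫ t in (0:ℝ)..T, Real.exp (-s * t) * u1 1 t = A := fun T hT => by
    rw [hA, ← intervalIntegral.integral_add_adjacent_intervals (b := T0) (c4.intervalIntegrable _ _) (c4.intervalIntegrable _ _)]
    have : ∫ t in T0..T, Real.exp (-s * t) * u1 1 t = 0 := by
      rw [intervalIntegral.integral_of_le hT.le]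
      refine setIntegral_eq_zero_of_forall_eq_zero fun t ht => ?_
      rw [hz t ht.1, mul_zero]
    rw [this, add_zero]
  let Bh : ℝ → ℝ := fun T => ∫ t in (0:ℝ)..T, Real.exp (-s * t) * rr q1 u1 t 0 1
  have L1' : Tendsto (fun T => φ 0 * Bh T + 1 / s * A) atTop (𝓝 0) := by
    refine L1.congr' ?_
    filter_upwards [eventually_gt_atTop T0] with T hT
    rw [eA T hT]
  have L2' : Tendsto (fun T => θ 0 * Bh T + 1 / s * A) atTop (𝓝 0) := by
    refine L2.congr' ?_
    filter_upwards [eventually_gt_atTop T0] with T hT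
    rw [← eA T hT]
    congr 2
    · simp only [Bh]
      refine intervalIntegral.integral_congr_ae (Eventually.of_forall fun t ht => ?_)
      rw [uIoc_of_le (by linarith)] at ht
      rw [P1.slope_b ht.1, P2.slope_b ht.1]
    · refine intervalIntegral.integral_congr_ae (Eventually.of_forall fun t ht => ?_)
      rw [uIoc_of_le (by linarith)] at ht
      rw [hb t ht.1]
  have L3 := (L1'.const_mul (θ 0)).sub (L2'.const_mul (φ 0))
  have e3 : (fun T => θ 0 * (φ 0 * Bh T + 1 / s * A) - φ 0 * (θ 0 * Bh T + 1 / s * A)) = fun _ => (θ 0 - φ 0) * A / s := by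
    ext T; ring
  rw [e3] at L3
  have := tendsto_nhds_unique tendsto_const_nhds L3
  have h9 : (θ 0 - φ 0) * A = 0 := by
    have h8 : (θ 0 - φ 0) * A / s = 0 := by rw [this]; ring
    rcases div_eq_zero_iff.1 h8 with h | h
    · exact h
    · exact absurd h hs0.ne'
  rw [a5, b5]
  have : (((θ 0 - φ 0) * A : ℝ) : ℂ) = 0 := by rw [h9]; simp
  push_cast at this
  linear_combination this

theorem lap_nonzero {g : ℝ → ℝ} (hg : Continuous g) {T0 : ℝ} (hT0 : 0 < T0) (h0 : ∀ t, t ≤ 0 → g t = 0) (h1 : ∀ t, T0 < t → g t = 0)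
    (hA : ∀ s : ℂ, ∫ t in (0:ℝ)..T0, Complex.exp (-s * t) * (g t : ℂ) = 0) : ∀ t, g t = 0 := by
  let G : ℝ → ℂ := fun t => (g t : ℂ)
  have hG : Continuous G := Complex.continuous_ofReal.comp hg
  have hsupp : ∀ t, t ∉ Ioc 0 T0 → g t = 0 := by
    intro t ht
    by_cases h : t ≤ 0
    · exact h0 t h
    · exact h1 t (by by_contra hc; exact ht ⟨not_le.1 h, not_lt.1 hc⟩)
  have hcs : HasCompactSupport G := by
    refine HasCompactSupport.intro (isCompact_Icc (a := 0) (b := T0)) fun t ht => ?_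
    simp only [G]
    rw [hsupp t (fun h => ht ⟨h.1.le, h.2⟩)]; simp
  have hF : FourierTransform.fourier G = (0 : ℝ → ℂ) := by
    ext ξ
    rw [Real.fourier_real_eq_integral_exp_smul]
    have := hA (2 * Real.pi * ξ * Complex.I)
    rw [intervalIntegral.integral_of_le hT0.le, setIntegral_eq_integral_of_forall_compl_eq_zero] at this
    · rw [Pi.zero_apply, ← this]
      congr 1
      ext t
      simp only [smul_eq_mul, G]
      congr 2
      push_cast
      simp
      ring
    · intro t ht; rw [hsupp t ht]; simp
  have := hG.fourierInv_fourier_eq (hG.integrable_of_hasCompactSupport hcs) (by rw [hF]; exact integrable_zero _ _ _)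
  rw [hF] at this
  intro t
  have h2 := congrFun this t
  rw [Real.fourierInv_eq'] at h2
  simp at h2
  exact Complex.ofReal_eq_zero.1 h2.symm

theorem D_eq {q1 q2 : ℝ → ℝ} {u1 ux1 uxx1 ut1 u2 ux2 uxx2 ut2 : ℝ → ℝ → ℝ} {f : ℝ → ℝ} {C1 c1 C2 c2 M T0 : ℝ}
    (P1 : HeatPack q1 u1 ux1 uxx1 ut1 f C1 c1) (P2 : HeatPack q2 u2 ux2 uxx2 ut2 f C2 c2)
    (hM1 : ∀ x, |q1 x| ≤ M) (hM2 : ∀ x, |q2 x| ≤ M) (hT0 : 0 < T0)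
    (hb : ∀ t, 0 < t → u1 1 t = u2 1 t) (hz : ∀ t, T0 < t → u1 1 t = 0) (hneg : ∀ t, t ≤ 0 → u1 1 t = 0)
    (hne : ∃ t, u1 1 t ≠ 0) (s : ℂ) :
    solY (pot q1 s) 0 0 1 1 = solY (pot q2 s) 0 0 1 1 := by
  have cu1 : Continuous (u1 1) := P1.hu.comp (by fun_prop : Continuous fun s : ℝ => ((1:ℝ), s))
  have cU : Continuous fun t => (u1 1 t : ℂ) := Complex.continuous_ofReal.comp cu1
  let A : ℂ → ℂ := fun s => ∫ t in (0:ℝ)..T0, Complex.exp (-s * t) * (u1 1 t : ℂ)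
  let D : ℂ → ℂ := fun s => solY (pot q1 s) 0 0 1 1 - solY (pot q2 s) 0 0 1 1
  have hAd : Differentiable ℂ A := fun z => by
    refine (deriv_int (𝕜 := ℂ) (F := fun s t => Complex.exp (-s * t) * (u1 1 t : ℂ))
      (F' := fun s t => Complex.exp (-s * t) * (-t) * (u1 1 t : ℂ)) (fun z => ?_) ?_ (fun z t => ?_) 0 T0 z).differentiableAt
    · exact (by fun_prop : Continuous fun t : ℝ => Complex.exp (-z * t)).mul cU
    · exact (by fun_prop : Continuous fun p : ℂ × ℝ => Complex.exp (-p.1 * p.2) * (-(p.2:ℂ))).mul (cU.comp continuous_snd)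
    · have := ((hasDerivAt_id z).neg.mul_const (t:ℂ)).cexp
      refine (this.mul_const _).congr_deriv ?_
      simp
  have hDd : Differentiable ℂ D :=
    (sol_differentiable P1.hq hM1 0 0 1 1).1.sub (sol_differentiable P2.hq hM2 0 0 1 1).1
  have hreal : ∀ σ : ℝ, max c1 c2 < σ → D σ * A σ = 0 := fun σ hσ => by
    have := two_packs P1 P2 hM1 hM2 hT0 hb hz ((le_max_left _ _).trans_lt hσ) ((le_max_right _ _).trans_lt hσ)
    rw [← this]
    congr 1
    simp only [A]
    rw [← intervalIntegral.integral_ofReal]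
    push_cast
    rfl
  have hDA : ∀ z, D z * A z = 0 := by
    have h1 : AnalyticOnNhd ℂ (fun z => D z * A z) univ := fun z _ => (hDd.mul hAd).analyticAt z
    have h2 : AnalyticOnNhd ℂ (fun _ : ℂ => (0:ℂ)) univ := fun z _ => analyticAt_const
    refine congrFun (h1.eq_of_frequently_eq h2 (z₀ := ((max c1 c2 + 1 : ℝ) : ℂ)) ?_)
    have ht : Tendsto (fun r : ℝ => (r : ℂ)) (𝓝[>] (max c1 c2 + 1)) (𝓝[≠] ((max c1 c2 + 1 : ℝ) : ℂ)) := by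
      refine tendsto_nhdsWithin_iff.2 ⟨(Complex.continuous_ofReal.tendsto _).mono_left nhdsWithin_le_nhds, ?_⟩
      filter_upwards [self_mem_nhdsWithin] with r hr
      have : r ≠ max c1 c2 + 1 := ne_of_gt hr
      exact fun h => this (Complex.ofReal_injective h)
    refine ht.frequently (Eventually.frequently ?_)
    filter_upwards [self_mem_nhdsWithin] with r hr
    exact hreal r (by have : max c1 c2 + 1 < r := hr; linarith)
  -- some point where A is nonzero
  obtain ⟨s0, hs0⟩ : ∃ s0, A s0 ≠ 0 := by
    by_contra hc
    push Not at hc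
    obtain ⟨t, ht⟩ := hne
    exact ht (lap_nonzero cu1 hT0 hneg hz hc t)
  have hev : ∀ᶠ z in 𝓝 s0, D z = 0 := by
    filter_upwards [hAd.continuous.continuousAt.eventually_ne hs0] with z hz
    exact (mul_eq_zero.1 (hDA z)).resolve_right hz
  have h1 : AnalyticOnNhd ℂ D univ := fun z _ => hDd.analyticAt z
  have h2 : AnalyticOnNhd ℂ (fun _ : ℂ => (0:ℂ)) univ := fun z _ => analyticAt_const
  have := congrFun (h1.eq_of_eventuallyEq h2 hev) s
  exact sub_eq_zero.1 this

noncomputable def cl (x : ℝ) : ℝ := max 0 (min x 1)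

theorem cl_mem (x : ℝ) : cl x ∈ Icc (0:ℝ) 1 := ⟨le_max_left _ _, max_le zero_le_one (min_le_right _ _)⟩

theorem cl_eq {x : ℝ} (hx : x ∈ Icc (0:ℝ) 1) : cl x = x := by
  rw [cl, min_eq_left hx.2, max_eq_right hx.1]

theorem cl_cont : Continuous cl := by unfold cl; fun_prop

theorem mkPack {q a f : ℝ → ℝ} {u ux uxx ut : ℝ → ℝ → ℝ} {C c : ℝ} (hq : ContinuousOn q (Icc 0 1))
    (hS : IsHeatSolution q a u ux uxx ut) (hC : 0 < C) (hc : 0 < c) (hB : HeatGrowthBound u ux C c)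
    (hf : ∀ t, 0 < t → f t = ux 0 t) :
    HeatPack (fun x => q (cl x)) (fun x t => u (cl x) (max t 0)) ux uxx ut f C c := by
  obtain ⟨s1, s2, s3, -, s5, -, s7, s8, s9⟩ := hS
  refine ⟨?_, ?_, ?_, hC, hc, ?_, ?_, ?_, ?_⟩
  · exact hq.comp_continuous cl_cont cl_mem
  · exact s1.comp_continuous (f := fun p : ℝ × ℝ => (cl p.1, max p.2 0))
      ((cl_cont.comp continuous_fst).prodMk (by fun_prop)) (fun p => ⟨cl_mem _, mem_Ici.2 (le_max_right p.2 0)⟩)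
  · intro x hx t ht
    have hx' : x ∈ Icc (0:ℝ) 1 := ⟨hx.1.le, hx.2.le⟩
    refine ⟨?_, s3 t ht x hx', ?_, ?_⟩
    · refine (s2 t ht x hx').congr_of_eventuallyEq ?_
      filter_upwards [Ioo_mem_nhds hx.1 hx.2] with y hy
      rw [cl_eq ⟨hy.1.le, hy.2.le⟩, max_eq_left ht.le]
    · refine (s5 x hx' t ht).congr_of_eventuallyEq ?_
      filter_upwards [lt_mem_nhds ht] with s hs
      rw [cl_eq hx', max_eq_left hs.le]
    · simp only [cl_eq hx', max_eq_left ht.le]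
      exact s7 x hx t ht
  · intro t ht x hx y hy
    simp only [cl_eq hx, cl_eq hy, max_eq_left ht.le]
    have := Convex.norm_image_sub_le_of_norm_hasDerivWithin_le (𝕜 := ℝ) (f := fun y => u y t) (f' := fun y => ux y t)
      (s := Icc (0:ℝ) 1) (C := C * Real.exp (c * t)) (fun z hz => (s2 t ht z hz).hasDerivWithinAt)
      (fun z hz => by
        have := hB z hz t ht.le
        rw [Real.norm_eq_abs]
        linarith [abs_nonneg (u z t)]) (convex_Icc _ _) hy hx
    simpa [Real.norm_eq_abs] using this
  · intro x; simp only [max_self]; exact s8 _ (cl_mem x)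
  · intro t
    rw [cl_eq ⟨le_rfl, zero_le_one⟩]
    rcases le_or_gt t 0 with h | h
    · rw [max_eq_right h]; exact s8 0 ⟨le_rfl, zero_le_one⟩
    · rw [max_eq_left h.le]; exact (s9 t h).1
  · intro t ht
    have h0 := s2 t ht 0 ⟨le_rfl, zero_le_one⟩
    have := (hasDerivAt_iff_tendsto_slope.1 h0).mono_left (nhdsWithin_mono 0 (fun x hx => ne_of_gt hx : Ioi (0:ℝ) ⊆ {0}ᶜ))
    rw [hf t ht]
    refine this.congr' ?_
    filter_upwards [Ioo_mem_nhdsGT (zero_lt_one' ℝ)] with x hx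
    rw [cl_eq ⟨hx.1.le, hx.2.le⟩, max_eq_left ht.le, slope_def_field, (s9 t ht).1]
    simp

/-- if two continuous potentials agree on `[1/2,1]` and the corresponding
classical heat solutions (same admissible pulse `a`) have the same flux at `x = 0` for
all `t > 0`, then the potentials coincide on `[0,1]`. -/
theorem flux_at_left_end_determines_potential_given_half
    (q1 q2 a : ℝ → ℝ)
    (hq1 : ContinuousOn q1 (Set.Icc 0 1)) (hq2 : ContinuousOn q2 (Set.Icc 0 1))
    (hhalf : ∀ x ∈ Set.Icc (1/2 : ℝ) 1, q1 x = q2 x)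
    (ha : IsAdmissiblePulse a)
    (u1 ux1 uxx1 ut1 u2 ux2 uxx2 ut2 : ℝ → ℝ → ℝ)
    (hu1 : IsHeatSolution q1 a u1 ux1 uxx1 ut1)
    (hu2 : IsHeatSolution q2 a u2 ux2 uxx2 ut2)
    (hb1 : ∃ C > (0:ℝ), ∃ c > (0:ℝ), HeatGrowthBound u1 ux1 C c)
    (hb2 : ∃ C > (0:ℝ), ∃ c > (0:ℝ), HeatGrowthBound u2 ux2 C c)
    (hflux : ∀ t > (0:ℝ), ux1 0 t = ux2 0 t) :
    ∀ x ∈ Set.Icc (0:ℝ) 1, q1 x = q2 x := by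
  obtain ⟨C1, hC1, c1, hc1, hB1⟩ := hb1
  obtain ⟨C2, hC2, c2, hc2, hB2⟩ := hb2
  have P1 := mkPack hq1 hu1 hC1 hc1 hB1 (f := fun t => ux1 0 t) (fun _ _ => rfl)
  have P2 := mkPack hq2 hu2 hC2 hc2 hB2 (f := fun t => ux1 0 t) hflux
  obtain ⟨M1, hM1⟩ := isCompact_Icc.exists_bound_of_continuousOn hq1
  obtain ⟨M2, hM2⟩ := isCompact_Icc.exists_bound_of_continuousOn hq2
  obtain ⟨-, ⟨T0, hT0, hT⟩, hane⟩ := ha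
  have m1 : (1:ℝ) ∈ Icc (0:ℝ) 1 := ⟨zero_le_one, le_rfl⟩
  have ub1 : ∀ t, 0 < t → u1 (cl 1) (max t 0) = a t := fun t ht => by
    rw [cl_eq m1, max_eq_left ht.le]; exact (hu1.2.2.2.2.2.2.2.2 t ht).2
  have ub2 : ∀ t, 0 < t → u2 (cl 1) (max t 0) = a t := fun t ht => by
    rw [cl_eq m1, max_eq_left ht.le]; exact (hu2.2.2.2.2.2.2.2.2 t ht).2
  have hM1' : ∀ x, |q1 (cl x)| ≤ max M1 M2 := fun x => (hM1 _ (cl_mem x)).trans (le_max_left _ _)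
  have hM2' : ∀ x, |q2 (cl x)| ≤ max M1 M2 := fun x => (hM2 _ (cl_mem x)).trans (le_max_right _ _)
  have hD := D_eq P1 P2 hM1' hM2' hT0 (fun t ht => (ub1 t ht).trans (ub2 t ht).symm)
    (fun t ht => (ub1 t (lt_trans hT0 ht)).trans (hT t ht))
    (fun t ht => by
      simp only [max_eq_right ht]; exact hu1.2.2.2.2.2.2.2.1 _ (cl_mem 1))
    (by
      by_contra hc
      push Not at hc
      apply hane
      filter_upwards [ae_restrict_mem measurableSet_Ioi] with t ht
      rw [← ub1 t ht]; exact hc t)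
  have hfin := HL P1.hq P2.hq hM1' hM2' (fun x hx => by
    refine hhalf _ ⟨?_, (cl_mem x).2⟩
    rw [cl]
    exact le_max_of_le_right (le_min hx (by norm_num))) hD
  have hIoo : ∀ x ∈ Ioo (0:ℝ) (1/2), q1 x = q2 x := fun x hx => by
    have := hfin x hx
    rwa [cl_eq ⟨hx.1.le, by linarith [hx.2]⟩] at this
  intro x hx
  rcases le_or_gt (1/2) x with h | h
  · exact hhalf x ⟨h, hx.2⟩
  rcases hx.1.eq_or_lt with h0 | h0
  · rw [← h0]
    have l1 : Tendsto (fun x => q1 (cl x)) (𝓝[>] 0) (𝓝 (q1 (cl 0))) := (P1.hq.tendsto 0).mono_left nhdsWithin_le_nhds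
    have l2 : Tendsto (fun x => q2 (cl x)) (𝓝[>] 0) (𝓝 (q2 (cl 0))) := (P2.hq.tendsto 0).mono_left nhdsWithin_le_nhds
    have := tendsto_nhds_unique (l1.congr' (by
      filter_upwards [Ioo_mem_nhdsGT (by norm_num : (0:ℝ) < 1/2)] with y hy using hfin y hy)) l2
    rwa [cl_eq ⟨le_rfl, zero_le_one⟩] at this
  · exact hIoo x ⟨h0, h⟩
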